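/- arXiv:2001.00654 — 2 statements merged into one kernel-verified Lean document; each statement's English description precedes it below -/
import Mathlib

section
/- Let n ≥ 1. In the field of rational functions ℚ(y,t), the evaluation of the bivariate polynomial C_n^{(pk,des)}(Y,T) := Σ_{π ∈ 𝔠_n} Y^{pk(π)+1} T^{des(π)+1} at Y = (1+y)²t/((y+t)(1+yt)) and T = (y+t)/(1+yt) equals ((1+y)/(n(1+yt)^{n+1})) · Σ_{d ∣ n} μ(d) (1−(−y)^d)^{n/d} (1−t)^{n−n/d} A_{n/d}(t). -/
open scoped Classical

noncomputable section

def oneLine (n : ℕ) (π : Equiv.Perm (Fin n)) (i : ℕ) : ℕ :=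
  if h : 1 ≤ i ∧ i ≤ n then (π ⟨i - 1, by omega⟩).val + 1 else 0

def des (n : ℕ) (π : Equiv.Perm (Fin n)) : ℕ :=
  ((Finset.Icc 1 (n - 1)).filter fun i => oneLine n π (i + 1) < oneLine n π i).card

def pk (n : ℕ) (π : Equiv.Perm (Fin n)) : ℕ :=
  ((Finset.Icc 2 (n - 1)).filter fun i =>
    oneLine n π (i - 1) < oneLine n π i ∧ oneLine n π (i + 1) < oneLine n π i).card

def lpk (n : ℕ) (π : Equiv.Perm (Fin n)) : ℕ :=
  ((Finset.Icc 1 (n - 1)).filter fun i =>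
    oneLine n π (i - 1) < oneLine n π i ∧ oneLine n π (i + 1) < oneLine n π i).card

def pval (n : ℕ) (π : Equiv.Perm (Fin n)) : ℕ :=
  ((Finset.Icc 2 (n - 1)).filter fun i =>
    oneLine n π i < oneLine n π (i - 1) ∧ oneLine n π i < oneLine n π (i + 1)).card

def udr (n : ℕ) (π : Equiv.Perm (Fin n)) : ℕ := lpk n π + pval n π + 1

def fullCycleType (n : ℕ) (π : Equiv.Perm (Fin n)) : Multiset ℕ :=
  π.cycleType + Multiset.replicate (n - π.support.card) 1

def numCycles (n : ℕ) (π : Equiv.Perm (Fin n)) : ℕ := Multiset.card (fullCycleType n π)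

def numOddCycles (n : ℕ) (π : Equiv.Perm (Fin n)) : ℕ :=
  Multiset.card ((fullCycleType n π).filter fun p => p % 2 = 1)

def IsCyclicPerm (n : ℕ) (π : Equiv.Perm (Fin n)) : Prop :=
  fullCycleType n π = {n}

def cyclicSet (n : ℕ) : Finset (Equiv.Perm (Fin n)) :=
  Finset.univ.filter fun π => IsCyclicPerm n π

def invSet (n : ℕ) : Finset (Equiv.Perm (Fin n)) :=
  Finset.univ.filter fun π => π ^ 2 = 1

def eulerianA (m : ℕ) : Polynomial ℚ :=
  ∑ π : Equiv.Perm (Fin m), Polynomial.X ^ (des m π + 1)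

def peakP (m : ℕ) : Polynomial ℚ :=
  ∑ π : Equiv.Perm (Fin m), Polynomial.X ^ (pk m π + 1)

def leftPeakP (m : ℕ) : Polynomial ℚ :=
  ∑ π : Equiv.Perm (Fin m), Polynomial.X ^ (lpk m π)

def cnk (n k : ℕ) : ℕ :=
  (Finset.univ.filter fun π : Equiv.Perm (Fin n) =>
    (∀ p ∈ fullCycleType n π, ¬ (4 ∣ p)) ∧ numCycles n (π ^ 2) = k).card

def bnk (n k : ℕ) : ℕ :=
  (Finset.univ.filter fun π : Equiv.Perm (Fin n) => numCycles n (π ^ 2) = k).card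

def dnk (n k : ℕ) : ℕ :=
  (Finset.univ.filter fun π : Equiv.Perm (Fin n) => numOddCycles n (π ^ 2) = k).card


/-! Part 1: transfer -/

def wt {R : Type*} [CommRing R] (y : R) (c : ℕ) : R := if Even c then y else 1

def sg (c : ℕ) : ℤ := if Even c then -1 else 1

def gg {R : Type*} [CommRing R] (y : R) (D : ℕ → Prop) : ℕ → ℕ → R
  | 0, c => wt y c
  | m + 1, c => wt y c * (∑ c' ∈ Finset.range c, gg y D m c' +
      if (Even c ↔ D m) then gg y D m c else 0)

def lastA (D : ℕ → Prop) : ℕ → Prop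
  | 0 => False
  | m + 1 => ¬ D m

lemma lastA_zero (D : ℕ → Prop) : lastA D 0 ↔ False := Iff.rfl

lemma lastA_succ (D : ℕ → Prop) (m : ℕ) : lastA D (m + 1) ↔ ¬ D m := Iff.rfl

def chainOK (D : ℕ → Prop) (m L : ℕ) (w : Fin (m + 1) → Fin L) : Prop :=
  ∀ i : Fin m, w i.castSucc < w i.succ ∨
    (w i.castSucc = w i.succ ∧ (Even (w i.castSucc : ℕ) ↔ D i))

lemma chainOK_snoc (D : ℕ → Prop) (m L : ℕ) (w : Fin (m + 1) → Fin L) (c : Fin L) :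
    chainOK D (m + 1) L (Fin.snoc (α := fun _ => Fin L) w c) ↔ chainOK D m L w ∧
      (w (Fin.last m) < c ∨ (w (Fin.last m) = c ∧ (Even (c : ℕ) ↔ D m))) := by
  unfold chainOK
  rw [Fin.forall_fin_succ']
  have h1 : ∀ i : Fin m, (Fin.snoc (α := fun _ => Fin L) w c) i.castSucc.succ = w i.succ := by
    intro i
    rw [← Fin.castSucc_succ, Fin.snoc_castSucc]
  have h2 : (Fin.snoc (α := fun _ => Fin L) w c) (Fin.last m).succ = c := by
    rw [Fin.succ_last, Fin.snoc_last]
  simp only [Fin.snoc_castSucc, h1, h2]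
  apply and_congr
  · simp
  · apply or_congr Iff.rfl
    apply and_congr_right
    intro h
    simp [h]

lemma chain_sum {R : Type*} [CommRing R] (y : R) (D : ℕ → Prop) (L : ℕ) (m : ℕ) (h : Fin L → R) :
    ∑ w : Fin (m + 1) → Fin L, (if chainOK D m L w then (∏ i, wt y (w i)) * h (w (Fin.last m)) else 0)
      = ∑ c : Fin L, gg y D m c * h c := by
  induction m generalizing h with
  | zero =>
    have : ∀ w : Fin (0 + 1) → Fin L, chainOK D 0 L w := fun w i => i.elim0
    simp only [this, if_true]
    change ∑ w : Fin 1 → Fin L, ((∏ i, wt y (w i)) * h (w (Fin.last 0))) = _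
    rw [← (Equiv.funUnique (Fin 1) (Fin L)).symm.sum_comp]
    simp [gg]
  | succ m ih =>
    rw [← (Fin.snocEquiv (fun _ => Fin L)).sum_comp, Fintype.sum_prod_type]
    refine Finset.sum_congr rfl fun c _ => ?_
    have := ih (fun x => (if (x < c ∨ (x = c ∧ (Even (c : ℕ) ↔ D m))) then wt y c * h c else 0))
    trans ∑ c_1 : Fin L, gg y D m c_1 * (if (c_1 < c ∨ (c_1 = c ∧ (Even (c : ℕ) ↔ D m))) then wt y c * h c else 0)
    · rw [← this]
      refine Finset.sum_congr rfl fun w _ => ?_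
      have e : (Fin.snocEquiv fun _ => Fin L) (c, w) = Fin.snoc (α := fun _ => Fin L) w c := rfl
      rw [e, Fin.prod_univ_castSucc]
      simp only [Fin.snoc_castSucc, Fin.snoc_last]
      by_cases h1 : chainOK D m L w <;> simp only [chainOK_snoc, h1, true_and, false_and, if_true, if_false]
      split_ifs <;> ring
    · have key : ∑ c_1 : Fin L, gg y D m c_1 * (if (c_1 < c ∨ (c_1 = c ∧ (Even (c : ℕ) ↔ D m))) then (1:R) else 0)
        = (∑ c' ∈ Finset.range c, gg y D m c' + if (Even (c:ℕ) ↔ D m) then gg y D m c else 0) := by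
        have s1 : ∀ x : Fin L, gg y D m x * (if (x < c ∨ (x = c ∧ (Even (c : ℕ) ↔ D m))) then (1:R) else 0)
          = (if x < c then gg y D m x else 0) + (if x = c then (if (Even (c:ℕ) ↔ D m) then gg y D m c else 0) else 0) := by
          intro x
          rcases lt_trichotomy x c with hx | hx | hx
          · simp [hx, hx.ne]
          · subst hx; simp
          · simp [hx.not_gt, hx.ne']
        rw [Finset.sum_congr rfl fun x _ => s1 x, Finset.sum_add_distrib]
        congr 1
        · have : ∀ x : Fin L, (if x < c then gg y D m x else 0) = (fun z : ℕ => if z < (c:ℕ) then gg y D m z else 0) x := fun x => rfl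
          rw [Finset.sum_congr rfl fun x _ => this x, Fin.sum_univ_eq_sum_range (fun z : ℕ => if z < (c:ℕ) then gg y D m z else 0), ← Finset.sum_filter]
          congr 1
          ext z
          simp
          have := c.2
          intro h; omega
        · simp
      simp only [gg]
      rw [← key, Finset.mul_sum, Finset.sum_mul]
      refine Finset.sum_congr rfl fun x _ => ?_
      split_ifs <;> ring

open PowerSeries in
lemma transfer {R : Type*} [CommRing R] (y : R) (D : ℕ → Prop) (m : ℕ) :
    PowerSeries.mk (fun k => ∑ c ∈ Finset.range (2 * k), gg y D m c) * (1 - X)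
     = X * (PowerSeries.mk (fun k => gg y D m (2 * k)) + PowerSeries.mk (fun k => gg y D m (2 * k + 1))) := by
  ext k
  rw [mul_sub, mul_one, map_sub]
  cases k with
  | zero => simp
  | succ k =>
    rw [PowerSeries.coeff_succ_mul_X, PowerSeries.coeff_succ_X_mul]
    simp only [PowerSeries.coeff_mk, map_add]
    rw [show 2 * (k + 1) = 2 * k + 1 + 1 by ring, Finset.sum_range_succ, Finset.sum_range_succ]
    ring

def qpoly {R : Type*} [CommRing R] (y : R) (D : ℕ → Prop) : ℕ → Polynomial R
  | 0 => 1
  | m + 1 => (if lastA D m then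
        (if D m then Polynomial.X * (1 + Polynomial.C y) else 1 + Polynomial.C y * Polynomial.X)
      else (if D m then Polynomial.X + Polynomial.C y else 1 + Polynomial.C y)) * qpoly y D m

def endf {R : Type*} [CommRing R] (y : R) (D : ℕ → Prop) (m : ℕ) : Polynomial R :=
  if lastA D m then 1 + Polynomial.C y * Polynomial.X else 1 + Polynomial.C y

open PowerSeries in
lemma transfer2 {R : Type*} [CommRing R] (y : R) (D : ℕ → Prop) (m : ℕ) :
    (PowerSeries.mk (fun k => gg y D m (2 * k + 1)) * (1 - X) ^ (m + 1) = (qpoly y D m : PowerSeries R)) ∧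
    PowerSeries.mk (fun k => gg y D m (2 * k)) = C y * (if lastA D m then X else 1) *
      PowerSeries.mk (fun k => gg y D m (2 * k + 1)) := by
  induction m with
  | zero =>
    constructor
    · simp only [gg, qpoly]
      have : (fun k : ℕ => wt y (2 * k + 1)) = 1 := by
        ext k; simp [wt]
      rw [this, zero_add, pow_one, PowerSeries.mk_one_mul_one_sub_eq_one]; simp
    · ext k; simp [gg, lastA, wt]
  | succ m ih =>
    obtain ⟨ih1, ih2⟩ := ih
    have tr := transfer y D m
    set P := PowerSeries.mk (fun k => ∑ c ∈ Finset.range (2 * k), gg y D m c) with hP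
    set Gm := PowerSeries.mk (fun k => gg y D m (2 * k)) with hGm
    set Gp := PowerSeries.mk (fun k => gg y D m (2 * k + 1)) with hGp
    have e1 : PowerSeries.mk (fun k => gg y D (m + 1) (2 * k)) = C y * (P + if D m then Gm else 0) := by
      ext k
      by_cases hD : D m <;> simp [gg, hP, hGm, hD, wt]
    have e2 : PowerSeries.mk (fun k => gg y D (m + 1) (2 * k + 1)) = (P + Gm + if D m then 0 else Gp) := by
      ext k
      by_cases hD : D m <;> simp [gg, hP, hGm, hGp, hD, wt, Finset.sum_range_succ]
    rw [e1, e2]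
    have hpow : ((1 : PowerSeries R) - X) ^ (m + 1 + 1) = (1 - X) * (1 - X) ^ (m + 1) := by ring
    constructor
    · rw [hpow]
      simp only [qpoly]
      by_cases hD : D m <;> by_cases hA : lastA D m <;>
        simp only [hD, hA, if_true, if_false, Polynomial.coe_mul, Polynomial.coe_add, Polynomial.coe_X,
          Polynomial.coe_C, Polynomial.coe_one, ← ih1] at ih2 ⊢ <;> rw [ih2] at tr ⊢ <;>
        linear_combination ((1 - X) ^ (m + 1)) * tr
    · have hu : IsUnit ((1 : PowerSeries R) - X) := by
        apply IsUnit.of_mul_eq_one (PowerSeries.mk 1)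
        rw [mul_comm]; exact PowerSeries.mk_one_mul_one_sub_eq_one R
      apply hu.mul_right_cancel
      by_cases hD : D m <;>
        simp only [lastA, hD, not_true_eq_false, not_false_eq_true, if_true, if_false]
      · ring
      · linear_combination C y * tr - C y * X * tr

lemma transfer3 {R : Type*} [CommRing R] (y : R) (D : ℕ → Prop) (m : ℕ) :
    PowerSeries.mk (fun k => ∑ c ∈ Finset.range (2 * k), gg y D m c) * (1 - PowerSeries.X) ^ (m + 2)
     = ((Polynomial.X * endf y D m * qpoly y D m : Polynomial R) : PowerSeries R) := by
  have h := transfer y D m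
  obtain ⟨h1, h2⟩ := transfer2 y D m
  rw [h2] at h
  rw [pow_succ', ← mul_assoc, h]
  unfold endf
  by_cases hA : lastA D m <;>
    simp only [hA, if_true, if_false, Polynomial.coe_mul, Polynomial.coe_add, Polynomial.coe_X,
          Polynomial.coe_C, Polynomial.coe_one, ← h1] <;> ring

lemma qpoly_eval {K : Type*} [Field K] (y t : K) (h1 : 1 + y ≠ 0) (h2 : y + t ≠ 0) (h3 : 1 + y * t ≠ 0)
    (D : ℕ → Prop) (m : ℕ) :
    (endf y D m * qpoly y D m).eval t = (1 + y) * (1 + y * t) ^ m *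
      ((1 + y) ^ 2 * t / ((y + t) * (1 + y * t))) ^ ((Finset.range m).filter fun i => D i ∧ lastA D i).card
      * ((y + t) / (1 + y * t)) ^ ((Finset.range m).filter D).card := by
  induction m with
  | zero => simp [endf, qpoly, lastA_zero]
  | succ m ih =>
    rw [Finset.range_add_one, Finset.filter_insert, Finset.filter_insert]
    have key : (endf y D (m+1) * qpoly y D (m+1)).eval t =
      (endf y D m * qpoly y D m).eval t * (1 + y * t) *
        (if D m ∧ lastA D m then ((1 + y) ^ 2 * t / ((y + t) * (1 + y * t))) else 1) *
        (if D m then ((y + t) / (1 + y * t)) else 1) := by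
      by_cases hD : D m <;> by_cases hA : lastA D m <;>
        simp [endf, qpoly, hD, hA, lastA_succ] <;> field_simp
      all_goals ring
    rw [key, ih]
    by_cases hD : D m <;> by_cases hA : lastA D m <;> simp [hD, hA] <;> ring

/-! Part 2: permutations -/

def Dp (m : ℕ) (π : Equiv.Perm (Fin (m + 1))) (i : ℕ) : Prop :=
  oneLine (m + 1) π (i + 2) < oneLine (m + 1) π (i + 1)

lemma oneLine_val (m : ℕ) (π : Equiv.Perm (Fin (m + 1))) (i : Fin (m + 1)) :
    oneLine (m + 1) π (i + 1) = (π i : ℕ) + 1 := by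
  have := i.2
  unfold oneLine
  rw [dif_pos (by omega)]
  rfl

lemma Dp_iff (m : ℕ) (π : Equiv.Perm (Fin (m + 1))) (i : Fin m) :
    Dp m π i ↔ π i.succ < π i.castSucc := by
  unfold Dp
  have h1 := oneLine_val m π i.succ
  have h2 := oneLine_val m π i.castSucc
  simp only [Fin.val_succ, Fin.val_castSucc] at h1 h2
  rw [h1, h2, Fin.lt_def]; omega

lemma Dp_not (m : ℕ) (π : Equiv.Perm (Fin (m + 1))) (i : ℕ) (hi : i < m) :
    ¬ Dp m π i ↔ oneLine (m + 1) π (i + 1) < oneLine (m + 1) π (i + 2) := by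
  have h1 := oneLine_val m π (Fin.succ ⟨i, hi⟩)
  have h2 := oneLine_val m π (Fin.castSucc ⟨i, hi⟩)
  simp only [Fin.val_succ, Fin.val_castSucc] at h1 h2
  unfold Dp
  rw [h1, h2]
  have : π (Fin.succ ⟨i, hi⟩) ≠ π (Fin.castSucc ⟨i, hi⟩) := by
    intro h
    have := π.injective h
    simp [Fin.ext_iff] at this
  rw [Ne, Fin.ext_iff] at this
  omega

lemma des_eq (m : ℕ) (π : Equiv.Perm (Fin (m + 1))) :
    des (m + 1) π = ((Finset.range m).filter (Dp m π)).card := by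
  unfold des
  symm
  apply Finset.card_bij (fun i _ => i + 1)
  · intro i hi
    simp only [Finset.mem_filter, Finset.mem_range, Finset.mem_Icc, Dp] at hi ⊢
    exact ⟨by omega, hi.2⟩
  · intro a _ b _ h; omega
  · intro b hb
    simp only [Finset.mem_filter, Finset.mem_range, Finset.mem_Icc, Dp] at hb ⊢
    refine ⟨b - 1, ⟨by omega, ?_⟩, by omega⟩
    rw [show b - 1 + 2 = b + 1 by omega, show b - 1 + 1 = b by omega]
    exact hb.2

lemma pk_eq (m : ℕ) (π : Equiv.Perm (Fin (m + 1))) :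
    pk (m + 1) π = ((Finset.range m).filter (fun i => Dp m π i ∧ lastA (Dp m π) i)).card := by
  unfold pk
  symm
  apply Finset.card_bij (fun i _ => i + 1)
  · intro i hi
    simp only [Finset.mem_filter, Finset.mem_range, Finset.mem_Icc] at hi ⊢
    obtain ⟨h1, h2, h3⟩ := hi
    cases i with
    | zero => exact h3.elim
    | succ i =>
      rw [lastA_succ, Dp_not m π i (by omega)] at h3
      refine ⟨by omega, ?_, h2⟩
      exact h3
  · intro a _ b _ h; omega
  · intro b hb
    simp only [Finset.mem_filter, Finset.mem_range, Finset.mem_Icc] at hb ⊢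
    obtain ⟨h1, h2, h3⟩ := hb
    obtain ⟨c, rfl⟩ : ∃ c, b = c + 2 := ⟨b - 2, by omega⟩
    refine ⟨c + 1, ⟨by omega, h3, ?_⟩, by omega⟩
    rw [lastA_succ, Dp_not m π c (by omega)]
    exact h2

def cp {n L : ℕ} (π : Equiv.Perm (Fin n)) (w : Fin n → Fin L) : Prop :=
  StrictMono (fun i : Fin n => toLex ((w i : ℕ), sg (w i) * ((π i : ℕ) : ℤ)))

lemma cp_iff (m L : ℕ) (π : Equiv.Perm (Fin (m + 1))) (w : Fin (m + 1) → Fin L) :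
    cp π w ↔ chainOK (Dp m π) m L w := by
  unfold cp chainOK
  rw [Fin.strictMono_iff_lt_succ]
  apply forall_congr'
  intro i
  rw [Prod.Lex.toLex_lt_toLex, Dp_iff]
  apply or_congr Iff.rfl
  simp only [Fin.val_inj]
  apply and_congr_right
  intro h
  rw [← h, Fin.lt_def]
  have : π i.succ ≠ π i.castSucc := by
    intro h
    have := π.injective h
    simp [Fin.ext_iff] at this
  rw [Ne, Fin.ext_iff] at this
  unfold sg
  by_cases he : Even (w i.castSucc : ℕ)
  · simp [he]
  · simp only [he, if_false, false_iff]; omega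

def Om {R : Type*} [CommRing R] (y : R) {n : ℕ} (π : Equiv.Perm (Fin n)) (k : ℕ) : R :=
  ∑ w : Fin n → Fin (2 * k), if cp π w then ∏ i, wt y (w i) else 0

def Rp {R : Type*} [CommRing R] (y : R) (m : ℕ) (π : Equiv.Perm (Fin (m + 1))) : Polynomial R :=
  Polynomial.X * endf y (Dp m π) m * qpoly y (Dp m π) m

lemma Om_ps {R : Type*} [CommRing R] (y : R) (m : ℕ) (π : Equiv.Perm (Fin (m + 1))) :
    PowerSeries.mk (fun k => Om y π k) * (1 - PowerSeries.X) ^ (m + 2) = (Rp y m π : PowerSeries R) := by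
  unfold Rp
  rw [← transfer3]
  congr 3
  ext k
  unfold Om
  simp only [cp_iff]
  have := chain_sum y (Dp m π) (2 * k) m (fun _ => 1)
  simp only [mul_one] at this
  rw [this, Fin.sum_univ_eq_sum_range (fun c => gg y (Dp m π) m c)]

lemma Rp_eval {K : Type*} [Field K] (y t : K) (h1 : 1 + y ≠ 0) (h2 : y + t ≠ 0) (h3 : 1 + y * t ≠ 0)
    (m : ℕ) (π : Equiv.Perm (Fin (m + 1))) :
    ((1 + y) ^ 2 * t / ((y + t) * (1 + y * t))) ^ (pk (m + 1) π + 1)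
          * ((y + t) / (1 + y * t)) ^ (des (m + 1) π + 1) =
      (1 + y) / (1 + y * t) ^ (m + 1 + 1) * (Rp y m π).eval t := by
  unfold Rp
  rw [mul_assoc, Polynomial.eval_mul, qpoly_eval y t h1 h2 h3, ← des_eq, ← pk_eq, Polynomial.eval_X,
    pow_succ _ (pk _ _), pow_succ _ (des _ _)]
  generalize ((1 + y) ^ 2 * t / ((y + t) * (1 + y * t))) ^ (pk (m + 1) π) = A
  generalize ((y + t) / (1 + y * t)) ^ (des (m + 1) π) = B
  field_simp
  ring

lemma Rp_zero {R : Type*} [CommRing R] (m : ℕ) (π : Equiv.Perm (Fin (m + 1))) :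
    Rp (0 : R) m π = Polynomial.X ^ (des (m + 1) π + 1) := by
  unfold Rp
  have : ∀ D : ℕ → Prop, qpoly (0 : R) D m = Polynomial.X ^ ((Finset.range m).filter D).card := by
    intro D
    induction m with
    | zero => simp [qpoly]
    | succ m ih =>
      rw [qpoly, ih (Equiv.refl _), Finset.range_add_one, Finset.filter_insert]
      by_cases hD : D m <;> simp [hD, pow_succ']
  rw [this, ← des_eq, endf]
  simp [pow_succ']

lemma sum_parity {R : Type*} [CommRing R] (a b : R) (k : ℕ) :
    ∑ c : Fin (2 * k), (if Even (c : ℕ) then a else b) = k * (a + b) := by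
  rw [Fin.sum_univ_eq_sum_range (fun c => if Even c then a else b)]
  induction k with
  | zero => simp
  | succ k ih =>
    rw [show 2 * (k + 1) = 2 * k + 1 + 1 by ring, Finset.sum_range_succ, Finset.sum_range_succ, ih]
    simp
    ring

lemma worp {R : Type*} [CommRing R] (m k : ℕ) :
    ∑ π : Equiv.Perm (Fin (m + 1)), Om (0 : R) π k = (k : R) ^ (m + 1) := by
  unfold Om
  have h1 : ∀ π : Equiv.Perm (Fin (m + 1)),
    (∑ w : Fin (m + 1) → Fin (2 * k), if cp π w then ∏ i, wt (0:R) (w i) else 0) =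
     ∑ u : Fin (m + 1) → Fin (2 * k), if π = Tuple.sort u then ∏ i, wt (0:R) (u i) else 0 := by
    intro π
    rw [← (Equiv.arrowCongr π.symm (Equiv.refl (Fin (2 * k)))).sum_comp]
    refine Finset.sum_congr rfl fun u _ => ?_
    have e : ∀ i, (Equiv.arrowCongr π.symm (Equiv.refl (Fin (2 * k)))) u i = u (π i) := by
      intro i; simp [Equiv.arrowCongr]
    simp only [e]
    rw [Equiv.prod_comp π (fun i => wt (0:R) (u i))]
    by_cases hu : ∃ i, Even (u i : ℕ)
    · obtain ⟨i, hi⟩ := hu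
      rw [Finset.prod_eq_zero (Finset.mem_univ i) (by simp [wt, hi])]
      simp
    · push Not at hu
      have : cp π ((Equiv.arrowCongr π.symm (Equiv.refl (Fin (2 * k)))) u) ↔ π = Tuple.sort u := by
        rw [Tuple.eq_sort_iff, cp]
        have hs : ∀ i, sg (u i) = 1 := fun i => by simp [sg, hu i]
        simp only [e, hs, one_mul]
        constructor
        · intro h
          have h' : ∀ i j, i < j → (u (π i) : ℕ) < u (π j) ∨
              ((u (π i) : ℕ) = u (π j) ∧ ((π i : ℕ) : ℤ) < ((π j : ℕ) : ℤ)) := by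
            intro i j hij
            exact Prod.Lex.toLex_lt_toLex.1 (h hij)
          refine ⟨fun i j hij => ?_, fun i j hij he => ?_⟩
          · rcases hij.eq_or_lt with rfl | hij
            · exact le_rfl
            · have := h' i j hij
              simp only [Function.comp, Fin.le_def]; omega
          · have := h' i j hij
            rw [Fin.ext_iff] at he
            rw [Fin.lt_def]; omega
        · rintro ⟨h1, h2⟩ i j hij
          apply Prod.Lex.toLex_lt_toLex.2
          have h3 := h1 hij.le
          have h4 := h2 i j hij
          simp only [Function.comp, Fin.le_def] at h3
          simp only [Fin.ext_iff, Fin.lt_def] at h4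
          simp only
          omega
      simp only [this]
  rw [Finset.sum_congr rfl fun π _ => h1 π, Finset.sum_comm]
  simp only [Finset.sum_ite_eq', Finset.mem_univ, if_true]
  rw [← Fintype.sum_pow (fun c : Fin (2 * k) => wt (0:R) c)]
  unfold wt
  rw [sum_parity]
  simp

lemma worp_ps (K : Type*) [Field K] (m : ℕ) :
    PowerSeries.mk (fun k => (k : K) ^ (m + 1)) * (1 - PowerSeries.X) ^ (m + 2) =
     ((∑ π : Equiv.Perm (Fin (m + 1)), Polynomial.X ^ (des (m + 1) π + 1) : Polynomial K) : PowerSeries K) := by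
  simp only [← Rp_zero]
  have : PowerSeries.mk (fun k => (k : K) ^ (m + 1)) =
    ∑ π : Equiv.Perm (Fin (m + 1)), PowerSeries.mk (fun k => Om (0 : K) π k) := by
    ext k
    simp only [map_sum, PowerSeries.coeff_mk, worp]
  rw [this, Finset.sum_mul]
  simp only [Om_ps]
  rw [← Polynomial.coeToPowerSeries.ringHom_apply, map_sum]
  rfl

/-! Part 4: signed words -/

lemma sg_cases (c : ℕ) : sg c = 1 ∨ sg c = -1 := by
  unfold sg; split_ifs <;> simp

set_option linter.unusedSectionVars false

section words

variable {n : ℕ} [NeZero n]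

def sp (W : ZMod n → ℕ) (j : ℕ) (a : ZMod n) : ℤ := ∏ i ∈ Finset.range j, sg (W (a + (i : ZMod n)))

def Good (W : ZMod n → ℕ) (σ : ZMod n ≃ Fin n) : Prop :=
  ∀ a b, σ a < σ b → W a < W b ∨
    (W a = W b ∧ sg (W a) * ((σ (a + 1) : ℕ) : ℤ) < sg (W a) * ((σ (b + 1) : ℕ) : ℤ))

def per (W : ZMod n → ℕ) (h : ZMod n) : Prop := ∀ a, W (a + h) = W a

def skey (W : ZMod n → ℕ) (a : ZMod n) : Lex (ℕ → ℤ) :=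
  toLex fun j => sp W j a * (W (a + (j : ZMod n)) : ℤ)

lemma skey_apply (W : ZMod n → ℕ) (a : ZMod n) (j : ℕ) :
    skey W a j = sp W j a * (W (a + (j : ZMod n)) : ℤ) := rfl

lemma sp_zero (W : ZMod n → ℕ) (a : ZMod n) : sp W 0 a = 1 := by simp [sp]

lemma sp_succ (W : ZMod n → ℕ) (j : ℕ) (a : ZMod n) :
    sp W (j + 1) a = sp W j a * sg (W (a + (j : ZMod n))) := by simp [sp, Finset.prod_range_succ]

lemma sp_add (W : ZMod n → ℕ) (i j : ℕ) (a : ZMod n) :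
    sp W (i + j) a = sp W i a * sp W j (a + (i : ZMod n)) := by
  simp only [sp, Finset.prod_range_add]
  congr 1
  refine Finset.prod_congr rfl fun x _ => ?_
  push_cast
  rw [add_assoc]

lemma sp_one (W : ZMod n → ℕ) (a : ZMod n) : sp W 1 a = sg (W a) := by simp [sp]

lemma sp_succ' (W : ZMod n → ℕ) (j : ℕ) (a : ZMod n) :
    sp W (j + 1) a = sg (W a) * sp W j (a + 1) := by
  rw [add_comm, sp_add, sp_one]; simp

lemma sp_cases (W : ZMod n → ℕ) (j : ℕ) (a : ZMod n) : sp W j a = 1 ∨ sp W j a = -1 := by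
  induction j with
  | zero => simp [sp_zero]
  | succ j ih =>
    rw [sp_succ]
    rcases ih with h | h <;> rcases sg_cases (W (a + (j : ZMod n))) with h' | h' <;> simp [h, h']

lemma sp_congr (W : ZMod n → ℕ) (j : ℕ) (a b : ZMod n)
    (h : ∀ i < j, W (a + (i : ZMod n)) = W (b + (i : ZMod n))) : sp W j a = sp W j b := by
  unfold sp
  refine Finset.prod_congr rfl fun i hi => ?_
  rw [h i (Finset.mem_range.1 hi)]

lemma key_prefix (W : ZMod n → ℕ) (j : ℕ) (a b : ZMod n)
    (h : ∀ i < j, skey W a i = skey W b i) : ∀ i < j, W (a + (i : ZMod n)) = W (b + (i : ZMod n)) := by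
  intro i
  induction i using Nat.strong_induction_on with
  | _ i ih =>
    intro hi
    have h1 := h i hi
    rw [skey_apply, skey_apply, sp_congr W i a b (fun x hx => ih x hx (hx.trans hi))] at h1
    rcases sp_cases W i b with h2 | h2 <;> rw [h2] at h1 <;> simpa using h1

lemma key_eq_per (W : ZMod n → ℕ) (a b : ZMod n) (h : skey W a = skey W b) : per W (b - a) := by
  intro x
  have h2 := key_prefix W ((x - a).val + 1) a b (fun i _ => by rw [h]) (x - a).val (by omega)
  rw [ZMod.natCast_zmod_val] at h2
  rw [show x + (b - a) = b + (x - a) by ring, ← h2]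
  congr 1
  ring

lemma good_le (W : ZMod n → ℕ) (σ : ZMod n ≃ Fin n) (h : Good W σ) (a b : ZMod n) (hw : W a < W b) :
    σ a < σ b := by
  by_contra hc
  rcases (not_lt.1 hc).eq_or_lt with h1 | h1
  · have := σ.injective h1
    subst this; omega
  · rcases h b a h1 with h2 | h2 <;> omega

lemma good_iff (W : ZMod n → ℕ) (σ : ZMod n ≃ Fin n) (h : Good W σ) (a b : ZMod n) (hw : W a = W b) :
    σ a < σ b ↔ sg (W a) * ((σ (a + 1) : ℕ) : ℤ) < sg (W a) * ((σ (b + 1) : ℕ) : ℤ) := by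
  constructor
  · intro h1
    rcases h a b h1 with h2 | h2
    · omega
    · exact h2.2
  · intro h1
    by_contra hc
    rcases (not_lt.1 hc).eq_or_lt with h3 | h3
    · have := σ.injective h3
      subst this; omega
    · rcases h b a h3 with h2 | h2
      · omega
      · rw [← hw] at h2
        exact absurd h1 (not_lt.2 h2.2.le)

lemma goodU (W : ZMod n → ℕ) (σ : ZMod n ≃ Fin n) (h : Good W σ) (a b : ZMod n) (j : ℕ)
    (hw : ∀ i < j, W (a + (i : ZMod n)) = W (b + (i : ZMod n))) :
    σ a < σ b ↔ sp W j a * ((σ (a + (j : ZMod n)) : ℕ) : ℤ) < sp W j a * ((σ (b + (j : ZMod n)) : ℕ) : ℤ) := by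
  induction j with
  | zero => simp [sp_zero]
  | succ j ih =>
    rw [ih (fun i hi => hw i (by omega)), sp_succ]
    have h1 := hw j (by omega)
    have h2 := good_iff W σ h _ _ h1
    have h3 := good_iff W σ h _ _ h1.symm
    rw [Fin.lt_def] at h2 h3
    rw [← h1] at h3
    push_cast
    rw [← add_assoc, ← add_assoc]
    rcases sp_cases W j a with hs | hs <;> rw [hs]
    · rw [one_mul, one_mul, one_mul, ← h2]; omega
    · constructor
      · intro h4
        have := h3.1 (by omega)
        linarith
      · intro h4
        have := h3.2 (by linarith)
        omega

lemma key_lt_iff (W : ZMod n → ℕ) (a b : ZMod n) :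
    skey W a < skey W b ↔ ∃ j, (∀ i < j, skey W a i = skey W b i) ∧ skey W a j < skey W b j := Iff.rfl

lemma key_lt_good (W : ZMod n → ℕ) (σ : ZMod n ≃ Fin n) (h : Good W σ) (a b : ZMod n)
    (hk : skey W a < skey W b) : σ a < σ b := by
  rw [key_lt_iff] at hk
  obtain ⟨j, h1, h2⟩ := hk
  have h3 := key_prefix W j a b h1
  rw [skey_apply, skey_apply, ← sp_congr W j a b h3] at h2
  rw [goodU W σ h a b j h3]
  rcases sp_cases W j a with hs | hs <;> rw [hs] at h2 ⊢
  · have := good_le W σ h (a + (j : ZMod n)) (b + (j : ZMod n)) (by omega)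
    rw [Fin.lt_def] at this; omega
  · have := good_le W σ h (b + (j : ZMod n)) (a + (j : ZMod n)) (by omega)
    rw [Fin.lt_def] at this; omega

lemma skey_succ (W : ZMod n → ℕ) (a : ZMod n) (j : ℕ) :
    skey W a (j + 1) = sg (W a) * skey W (a + 1) j := by
  rw [skey_apply, skey_apply, sp_succ']
  push_cast
  rw [show a + 1 + (j : ZMod n) = a + ((j : ZMod n) + 1) by ring]
  ring

lemma skey_zero (W : ZMod n → ℕ) (a : ZMod n) : skey W a 0 = W a := by
  rw [skey_apply, sp_zero]; simp

lemma key_step (W : ZMod n → ℕ) (a b : ZMod n) (hk : skey W a < skey W b) :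
    W a < W b ∨ (W a = W b ∧ ((sg (W a) = 1 ∧ skey W (a + 1) < skey W (b + 1)) ∨
      (sg (W a) = -1 ∧ skey W (b + 1) < skey W (a + 1)))) := by
  rw [key_lt_iff] at hk
  obtain ⟨j, h1, h2⟩ := hk
  cases j with
  | zero =>
    rw [skey_zero, skey_zero] at h2
    left; exact_mod_cast h2
  | succ j =>
    right
    have h0 := h1 0 (by omega)
    rw [skey_zero, skey_zero] at h0
    have h0' : W a = W b := by exact_mod_cast h0
    refine ⟨h0', ?_⟩
    have h3 : ∀ i < j, sg (W a) * skey W (a + 1) i = sg (W a) * skey W (b + 1) i := by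
      intro i hi
      have := h1 (i + 1) (by omega)
      rwa [skey_succ, skey_succ, ← h0'] at this
    rw [skey_succ, skey_succ, ← h0'] at h2
    rcases sg_cases (W a) with hs | hs <;> rw [hs] at h2 h3
    · left
      refine ⟨hs, (key_lt_iff _ _ _).2 ⟨j, fun i hi => ?_, ?_⟩⟩
      · have := h3 i hi; linarith
      · linarith
    · right
      refine ⟨hs, (key_lt_iff _ _ _).2 ⟨j, fun i hi => ?_, ?_⟩⟩
      · have := h3 i hi; linarith
      · linarith

lemma key_eq_step (W : ZMod n → ℕ) (a b : ZMod n) (hk : skey W a = skey W b) :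
    W a = W b ∧ skey W (a + 1) = skey W (b + 1) := by
  have h0 : skey W a 0 = skey W b 0 := by rw [hk]
  rw [skey_zero, skey_zero] at h0
  have h0' : W a = W b := by exact_mod_cast h0
  refine ⟨h0', ?_⟩
  apply ofLex.injective
  funext j
  change skey W (a + 1) j = skey W (b + 1) j
  have h1 : skey W a (j + 1) = skey W b (j + 1) := by rw [hk]
  rw [skey_succ, skey_succ, ← h0'] at h1
  rcases sg_cases (W a) with hs | hs <;> rw [hs] at h1 <;> linarith

def tkey (W : ZMod n → ℕ) (τ : ZMod n → ℤ) (a : ZMod n) : Lex (ℕ → ℤ) ×ₗ ℤ := toLex (skey W a, τ a)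

lemma exists_order {β : Type*} [LinearOrder β] (f : ZMod n → β) (hf : Function.Injective f) :
    ∃ σ : ZMod n ≃ Fin n, ∀ a b, σ a < σ b ↔ f a < f b := by
  let s := Finset.univ.image f
  have hs : s.card = n := by
    rw [Finset.card_image_of_injective _ hf, Finset.card_univ, ZMod.card]
  let e := s.orderIsoOfFin hs
  have hm : ∀ a, f a ∈ s := fun a => Finset.mem_image_of_mem _ (Finset.mem_univ _)
  have hinj : Function.Injective (fun a => e.symm ⟨f a, hm a⟩) := by
    intro a b h
    have := e.symm.injective h
    exact hf (Subtype.ext_iff.1 this)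
  have hb : Function.Bijective (fun a => e.symm ⟨f a, hm a⟩) := by
    rw [Fintype.bijective_iff_injective_and_card]
    exact ⟨hinj, by simp [ZMod.card]⟩
  refine ⟨Equiv.ofBijective _ hb, fun a b => ?_⟩
  simp [Equiv.ofBijective_apply]

lemma exists_good (W : ZMod n → ℕ) (τ : ZMod n → ℤ) (hτ : ∀ a, τ (a + 1) = sg (W a) * τ a)
    (hi : Function.Injective (tkey W τ)) :
    ∃ σ : ZMod n ≃ Fin n, Good W σ ∧ ∀ a b, σ a < σ b ↔ tkey W τ a < tkey W τ b := by
  obtain ⟨σ, hσ⟩ := exists_order (tkey W τ) hi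
  refine ⟨σ, fun a b hab => ?_, hσ⟩
  rw [hσ, tkey, tkey, Prod.Lex.toLex_lt_toLex] at hab
  have hf : ∀ a b, skey W a < skey W b → σ a < σ b := by
    intro a b h
    rw [hσ, tkey, tkey, Prod.Lex.toLex_lt_toLex]
    exact Or.inl h
  have hg : ∀ a b, skey W a = skey W b → τ a < τ b → σ a < σ b := by
    intro a b h h'
    rw [hσ, tkey, tkey, Prod.Lex.toLex_lt_toLex]
    exact Or.inr ⟨h, h'⟩
  rcases hab with h | ⟨h, h'⟩
  · rcases key_step W a b h with h1 | ⟨h1, ⟨h2, h3⟩ | ⟨h2, h3⟩⟩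
    · exact Or.inl h1
    · right
      have := hf _ _ h3
      rw [Fin.lt_def] at this
      rw [h2]; exact ⟨h1, by omega⟩
    · right
      have := hf _ _ h3
      rw [Fin.lt_def] at this
      rw [h2]; exact ⟨h1, by omega⟩
  · right
    simp only at h h'
    obtain ⟨h1, h2⟩ := key_eq_step W a b h
    refine ⟨h1, ?_⟩
    have ta := hτ a
    have tb := hτ b
    rw [← h1] at tb
    rcases sg_cases (W a) with hs | hs <;> rw [hs] at ta tb ⊢
    · have := hg _ _ h2 (by linarith)
      rw [Fin.lt_def] at this; omega
    · have := hg _ _ h2.symm (by linarith)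
      rw [Fin.lt_def] at this; omega

lemma order_unique (σ σ' : ZMod n ≃ Fin n) (h : ∀ a b, σ a < σ b → σ' a < σ' b) : σ = σ' := by
  have hm : StrictMono (σ.symm.trans σ') := by
    intro x y hxy
    simp only [Equiv.trans_apply]
    apply h
    simpa using hxy
  have h1 : (hm.orderIsoOfSurjective _ (σ.symm.trans σ').surjective) = OrderIso.refl _ :=
    Subsingleton.elim _ _
  ext a
  have := DFunLike.congr_fun h1 (σ a)
  simp at this
  rw [this]

lemma good_lt_iff (W : ZMod n → ℕ) (σ : ZMod n ≃ Fin n) (τ : ZMod n → ℤ)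
    (hi : Function.Injective (tkey W τ))
    (h : ∀ a b, tkey W τ a < tkey W τ b → σ a < σ b) (a b) : σ a < σ b → tkey W τ a < tkey W τ b := by
  intro hab
  rcases lt_trichotomy (tkey W τ a) (tkey W τ b) with h1 | h1 | h1
  · exact h1
  · have := hi h1
    subst this; exact absurd hab (lt_irrefl _)
  · exact absurd hab (h _ _ h1).not_gt

lemma per_sp (W : ZMod n → ℕ) (h : ZMod n) (hp : per W h) (j : ℕ) (a : ZMod n) :
    sp W j (a + h) = sp W j a := by
  apply sp_congr
  intro i _
  rw [show a + h + (i : ZMod n) = a + (i : ZMod n) + h by ring, hp]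

lemma per_sp2 (W : ZMod n → ℕ) (j : ℕ) (hp : per W (j : ZMod n)) (a : ZMod n) :
    sp W j a = sp W j 0 := by
  have h1 := sp_add W j a.val 0
  have h2 := sp_add W a.val j 0
  rw [per_sp W _ hp] at h1
  rw [add_comm, h1, ZMod.natCast_zmod_val, zero_add, mul_comm] at h2
  rcases sp_cases W a.val 0 with h | h <;> rw [h] at h2 <;> linarith

lemma good_per_one (W : ZMod n → ℕ) (σ : ZMod n ≃ Fin n) (h : Good W σ) (j : ℕ)
    (hp : per W (j : ZMod n)) (hs : sp W j 0 = 1) : (j : ZMod n) = 0 := by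
  by_contra hj
  have key : ∀ a, σ a < σ (a + j) ↔ σ (a + j) < σ (a + j + j) := by
    intro a
    rw [goodU W σ h a (a + j) j (fun i _ => by
      rw [show a + (j : ZMod n) + (i : ZMod n) = a + (i : ZMod n) + j by ring, hp]),
      per_sp2 W j hp, hs, Fin.lt_def]
    omega
  have hne : ∀ a, σ a ≠ σ (a + j) := by
    intro a e
    have := σ.injective e
    apply hj
    simpa using this
  have hend : σ (0 : ZMod n) = σ ((n : ZMod n) * (j : ZMod n)) := by simp
  rcases lt_or_gt_of_ne (hne 0) with h0 | h0
  · have : ∀ i : ℕ, σ ((i : ZMod n) * j) < σ (((i + 1 : ℕ) : ZMod n) * j) := by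
      intro i
      induction i with
      | zero => simpa using h0
      | succ i ih =>
        push_cast at ih ⊢
        rw [add_mul, one_mul] at ih
        rw [add_mul, add_mul, add_mul, one_mul]
        exact (key _).1 ih
    have hm := strictMono_nat_of_lt_succ (f := fun i : ℕ => σ ((i : ZMod n) * j)) this
    have := hm (NeZero.pos n)
    simp at this
  · have : ∀ i : ℕ, σ (((i + 1 : ℕ) : ZMod n) * j) < σ ((i : ZMod n) * j) := by
      intro i
      induction i with
      | zero => simpa using h0
      | succ i ih =>
        push_cast at ih ⊢
        rw [add_mul, one_mul] at ih
        rw [add_mul, add_mul, one_mul]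
        have h1 := key ((i : ZMod n) * j)
        have h2 := hne ((i : ZMod n) * j + j)
        have h3 : ¬ (σ ((i : ZMod n) * j + j) < σ ((i : ZMod n) * j + j + j)) := by
          rw [← h1]; exact ih.not_gt
        exact lt_of_le_of_ne (not_lt.1 h3) h2.symm
    have hm := strictAnti_nat_of_succ_lt (f := fun i : ℕ => σ ((i : ZMod n) * j)) this
    have := hm (NeZero.pos n)
    simp at this

lemma exists_period (W : ZMod n → ℕ) : ∃ p : ℕ, 0 < p ∧ ∀ j : ℕ, per W (j : ZMod n) ↔ p ∣ j := by
  let T : (ZMod n → ℕ) → (ZMod n → ℕ) := fun f a => f (a + 1)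
  have hT : ∀ j : ℕ, T^[j] W = fun a => W (a + j) := by
    intro j
    induction j with
    | zero => simp
    | succ j ih =>
      rw [Function.iterate_succ_apply', ih]
      funext a
      simp only [T]
      push_cast
      congr 1; ring
  have hP : ∀ j : ℕ, Function.IsPeriodicPt T j W ↔ per W (j : ZMod n) := by
    intro j
    unfold Function.IsPeriodicPt Function.IsFixedPt per
    rw [hT, funext_iff]
  refine ⟨Function.minimalPeriod T W, ?_, fun j => ?_⟩
  · apply Function.IsPeriodicPt.minimalPeriod_pos (NeZero.pos n)
    rw [hP]
    intro a; simp
  · rw [← hP, Function.isPeriodicPt_iff_minimalPeriod_dvd]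

def NW (W : ZMod n → ℕ) : ℕ := (Finset.univ.filter fun σ : ZMod n ≃ Fin n => Good W σ).card

lemma NW_zero (W : ZMod n → ℕ) (j : ℕ) (hp : per W (j : ZMod n)) (hj : (j : ZMod n) ≠ 0)
    (hs : sp W j 0 = 1) : NW W = 0 := by
  unfold NW
  rw [Finset.card_eq_zero, Finset.filter_eq_empty_iff]
  intro σ _ h
  exact hj (good_per_one W σ h j hp hs)

lemma NW_one (W : ZMod n → ℕ) (hp : ∀ h, per W h → h = 0) : NW W = 1 := by
  have hi : Function.Injective (tkey W 0) := by
    intro a b hab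
    have : skey W a = skey W b := congrArg (fun x => (ofLex x).1) hab
    have := hp _ (key_eq_per W a b this)
    exact (sub_eq_zero.1 this).symm
  obtain ⟨σ, h1, h2⟩ := exists_good W 0 (by simp) hi
  unfold NW
  rw [Finset.card_eq_one]
  refine ⟨σ, ?_⟩
  ext σ'
  simp only [Finset.mem_filter, Finset.mem_univ, true_and, Finset.mem_singleton]
  constructor
  · intro h
    symm
    apply order_unique
    intro a b hab
    rw [h2, tkey, tkey, Prod.Lex.toLex_lt_toLex] at hab
    rcases hab with hab | hab
    · exact key_lt_good W σ' h a b hab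
    · simp at hab
  · rintro rfl; exact h1

lemma NW_two (W : ZMod n → ℕ) (p : ℕ) (hn : n = 2 * p) (hper : ∀ j : ℕ, per W (j : ZMod n) ↔ p ∣ j)
    (hs : sp W p 0 = -1) : NW W = 2 := by
  have hp0 : 0 < p := by have := NeZero.pos n; omega
  have hpp : per W (p : ZMod n) := (hper p).2 dvd_rfl
  set τ : ZMod n → ℤ := fun a => sp W a.val 0 with hτdef
  have hτpm : ∀ a, τ a = 1 ∨ τ a = -1 := fun a => sp_cases W a.val 0
  have hsn : sp W n 0 = 1 := by
    have e : sp W n 0 = sp W (2 * p) 0 := congrArg (fun x => sp W x 0) hn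
    rw [e, two_mul, sp_add, per_sp2 W p hpp (0 + _), hs]; norm_num
  have hτ : ∀ a, τ (a + 1) = sg (W a) * τ a := by
    intro a
    have h1 := sp_succ W a.val 0
    rw [ZMod.natCast_zmod_val, zero_add] at h1
    rw [mul_comm]
    simp only [hτdef]
    rw [← h1]
    by_cases ha : a.val + 1 = n
    · have : a + 1 = 0 := by
        have : ((a.val + 1 : ℕ) : ZMod n) = 0 := by rw [ha]; simp
        push_cast at this
        rwa [ZMod.natCast_zmod_val] at this
      rw [this, ha, hsn]; simp [sp_zero]
    · have hlt := ZMod.val_lt a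
      rw [← ZMod.val_natCast_of_lt (n := n) (a := a.val + 1) (by omega)]
      push_cast
      rw [ZMod.natCast_zmod_val]
  have hτj : ∀ (j : ℕ) a, τ (a + j) = sp W j a * τ a := by
    intro j a
    induction j with
    | zero => simp [sp_zero]
    | succ j ih =>
      push_cast
      rw [← add_assoc, hτ, ih, sp_succ]; ring
  have hτp : ∀ a, τ (a + p) = - τ a := by
    intro a
    rw [hτj, per_sp2 W p hpp, hs]; ring
  have hτ0 : τ 0 = 1 := by simp [hτdef, sp_zero]
  have hkey : ∀ a b, skey W a = skey W b → a = b ∨ b = a + p := by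
    intro a b hab
    have h1 := key_eq_per W a b hab
    rw [← ZMod.natCast_zmod_val (b - a), hper] at h1
    have hlt := ZMod.val_lt (b - a)
    obtain ⟨c, hc⟩ := h1
    have hc2 : c < 2 := by
      by_contra hcc
      have : p * 2 ≤ p * c := Nat.mul_le_mul_left _ (by omega)
      omega
    have h2 := ZMod.natCast_zmod_val (b - a)
    interval_cases c
    · left
      rw [hc] at h2
      simp at h2
      exact (sub_eq_zero.1 h2.symm).symm
    · right
      rw [hc, mul_one] at h2
      rw [h2]; ring
  have hinj : ∀ δ : ℤ, δ ≠ 0 → Function.Injective (tkey W (fun a => δ * τ a)) := by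
    intro δ hδ a b hab
    have h1 : skey W a = skey W b := congrArg (fun x => (ofLex x).1) hab
    have h2 : δ * τ a = δ * τ b := congrArg (fun x => (ofLex x).2) hab
    rcases hkey a b h1 with h | h
    · exact h
    · rw [h, hτp] at h2
      have := mul_left_cancel₀ hδ h2
      rcases hτpm a with h' | h' <;> rw [h'] at this <;> omega
  obtain ⟨σ1, g1, l1⟩ := exists_good W (fun a => 1 * τ a) (by intro a; rw [hτ]; ring) (hinj 1 (by norm_num))
  obtain ⟨σ2, g2, l2⟩ := exists_good W (fun a => (-1) * τ a) (by intro a; rw [hτ]; ring) (hinj (-1) (by norm_num))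
  have hk0 : skey W 0 = skey W (p : ZMod n) := by
    apply ofLex.injective
    funext j
    change skey W 0 j = skey W (p : ZMod n) j
    rw [skey_apply, skey_apply]
    have h1 := per_sp W p hpp j 0
    rw [zero_add] at h1
    rw [h1, add_comm (p : ZMod n), hpp, zero_add]
  have hp1 : τ (p : ZMod n) = -1 := by
    have := hτp 0
    rwa [zero_add, hτ0] at this
  have hne : σ1 ≠ σ2 := by
    rintro rfl
    have h1 : σ1 (p : ZMod n) < σ1 0 := by
      rw [l1, tkey, tkey, Prod.Lex.toLex_lt_toLex]
      right; exact ⟨hk0.symm, by simp [hp1, hτ0]⟩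
    have h2 : σ1 0 < σ1 (p : ZMod n) := by
      rw [l2, tkey, tkey, Prod.Lex.toLex_lt_toLex]
      right; exact ⟨hk0, by simp [hp1, hτ0]⟩
    exact absurd h1 h2.not_gt
  have hU : ∀ σ, Good W σ → ∀ a : ZMod n, (σ 0 < σ p ↔ τ a * ((σ a : ℕ) : ℤ) < τ a * ((σ (a + p) : ℕ) : ℤ)) := by
    intro σ h a
    have := goodU W σ h 0 p a.val (fun i _ => by rw [add_comm (p : ZMod n), hpp, zero_add])
    rwa [ZMod.natCast_zmod_val, zero_add, add_comm (p : ZMod n)] at this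
  have h0p : (0 : ZMod n) ≠ p := by
    intro e
    rw [← e, hτ0] at hp1
    norm_num at hp1
  unfold NW
  rw [Finset.card_eq_two]
  refine ⟨σ1, σ2, hne, ?_⟩
  ext σ
  simp only [Finset.mem_filter, Finset.mem_univ, true_and, Finset.mem_insert, Finset.mem_singleton]
  constructor
  · intro h
    rcases lt_or_gt_of_ne (σ.injective.ne h0p) with hlt | hlt
    · right
      symm
      apply order_unique
      intro a b hab
      rw [l2, tkey, tkey, Prod.Lex.toLex_lt_toLex] at hab
      rcases hab with hab | ⟨hab, hab2⟩
      · exact key_lt_good W σ h a b hab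
      · simp only at hab hab2
        rcases hkey a b hab with rfl | rfl
        · omega
        · have := (hU σ h a).1 hlt
          rw [hτp] at hab2
          rcases hτpm a with h' | h' <;> rw [h'] at this hab2
          · rw [Fin.lt_def]; omega
          · omega
    · left
      symm
      apply order_unique
      intro a b hab
      rw [l1, tkey, tkey, Prod.Lex.toLex_lt_toLex] at hab
      rcases hab with hab | ⟨hab, hab2⟩
      · exact key_lt_good W σ h a b hab
      · simp only at hab hab2
        rcases hkey a b hab with rfl | rfl
        · omega
        · have h3 := (hU σ h a).not.1 hlt.not_gt
          have h4 : σ a ≠ σ (a + p) := by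
            intro e
            have := σ.injective e
            apply h0p
            simp at this
            exact this.symm
          rw [Ne, Fin.ext_iff] at h4
          rw [hτp] at hab2
          rcases hτpm a with h' | h' <;> rw [h'] at h3 hab2
          · omega
          · rw [Fin.lt_def]; omega
  · rintro (rfl | rfl)
    · exact g1
    · exact g2

end words

/-! Part 5: Moebius -/

lemma mob_one (m : ℕ) (hm : 0 < m) :
    ∑ d ∈ m.divisors, ArithmeticFunction.moebius d * (1 : ℤ) = if m = 1 then 1 else 0 := by
  have h := (ArithmeticFunction.sum_eq_iff_sum_mul_moebius_eq (R := ℤ) (f := fun i => if i = 1 then 1 else 0)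
    (g := fun _ => 1)).1 (by
      intro i hi
      simp [hi.ne']) m hm
  simp only [Int.cast_id] at h
  rw [← h, Nat.sum_divisorsAntidiagonal (f := fun d _ => (ArithmeticFunction.moebius d : ℤ) * 1)]

lemma mob_neg (m : ℕ) (hm : 0 < m) :
    ∑ d ∈ m.divisors, ArithmeticFunction.moebius d * (-1 : ℤ) ^ (m / d) =
      if m = 1 then -1 else if m = 2 then 2 else 0 := by
  have h := (ArithmeticFunction.sum_eq_iff_sum_mul_moebius_eq (R := ℤ)
    (f := fun i => if i = 1 then -1 else if i = 2 then 2 else 0)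
    (g := fun i => (-1) ^ i)).1 (by
      intro i hi
      have : ∀ x : ℕ, (if x = 1 then (-1 : ℤ) else if x = 2 then 2 else 0) =
        (if x = 1 then -1 else 0) + (if x = 2 then 2 else 0) := by
        intro x
        split_ifs <;> first | omega | simp
      simp only [this]
      rw [Finset.sum_add_distrib, Finset.sum_ite_eq', Finset.sum_ite_eq']
      rcases Nat.even_or_odd i with he | ho
      · simp [hi.ne', he.neg_one_pow, he.two_dvd]
      · have : ¬ 2 ∣ i := by rw [← even_iff_two_dvd]; simpa using ho
        simp [hi.ne', ho.neg_one_pow, this]) m hm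
  simp only [Int.cast_id] at h
  rw [← h, Nat.sum_divisorsAntidiagonal (f := fun d e => (ArithmeticFunction.moebius d : ℤ) * (-1) ^ e)]

lemma sp_mul {n : ℕ} [NeZero n] (W : ZMod n → ℕ) (p : ℕ) (hp : per W (p : ZMod n)) (f : ℕ) :
    sp W (p * f) 0 = sp W p 0 ^ f := by
  induction f with
  | zero => simp [sp_zero]
  | succ f ih => rw [mul_add, mul_one, sp_add, ih, per_sp2 W p hp (0 + _), pow_succ]

lemma NW_eq {n : ℕ} [NeZero n] (W : ZMod n → ℕ) :
    (NW W : ℤ) = ∑ d ∈ n.divisors, if per W ((n / d : ℕ) : ZMod n) then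
      ArithmeticFunction.moebius d * (sp W (n / d) 0) ^ (d + 1) else 0 := by
  obtain ⟨p, hp0, hper⟩ := exists_period W
  have hn0 := NeZero.pos n
  obtain ⟨m, hm⟩ : p ∣ n := (hper n).1 (by intro a; simp)
  have hm0 : 0 < m := by
    rcases Nat.eq_zero_or_pos m with h | h
    · rw [h] at hm; omega
    · exact h
  have hpp : per W (p : ZMod n) := (hper p).2 dvd_rfl
  have hsum : (∑ d ∈ n.divisors, if per W ((n / d : ℕ) : ZMod n) then
      ArithmeticFunction.moebius d * (sp W (n / d) 0) ^ (d + 1) else 0) =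
      ∑ d ∈ m.divisors, ArithmeticFunction.moebius d * sp W p 0 ^ (m + m / d) := by
    rw [← Finset.sum_filter]
    have hset : (n.divisors.filter fun d => per W ((n / d : ℕ) : ZMod n)) = m.divisors := by
      ext d
      simp only [Finset.mem_filter, Nat.mem_divisors, hper]
      constructor
      · rintro ⟨⟨h1, h2⟩, f, hf⟩
        refine ⟨⟨f, ?_⟩, hm0.ne'⟩
        have h3 := Nat.mul_div_cancel' h1
        rw [hf] at h3
        have : p * m = p * (d * f) := by rw [← hm, ← h3]; ring
        exact Nat.eq_of_mul_eq_mul_left hp0 this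
      · rintro ⟨⟨f, hf⟩, _⟩
        have hd : 0 < d := by
          rcases Nat.eq_zero_or_pos d with h | h
          · rw [h] at hf; omega
          · exact h
        have hnd : n = d * (p * f) := by rw [hm, hf]; ring
        refine ⟨⟨⟨_, hnd⟩, hn0.ne'⟩, ⟨f, ?_⟩⟩
        exact Nat.div_eq_of_eq_mul_right hd hnd
    rw [hset]
    refine Finset.sum_congr rfl fun d hd => ?_
    obtain ⟨⟨f, hf⟩, _⟩ := Nat.mem_divisors.1 hd
    have hd : 0 < d := by
      rcases Nat.eq_zero_or_pos d with h | h
      · rw [h] at hf; omega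
      · exact h
    have hnd : n / d = p * f := Nat.div_eq_of_eq_mul_right hd (by rw [hm, hf]; ring)
    have hmd : m / d = f := Nat.div_eq_of_eq_mul_right hd hf
    rw [hnd, sp_mul W p hpp, hmd, ← pow_mul, hf]
    congr 2; ring
  rw [hsum]
  have hcast : ∀ j : ℕ, (j : ZMod n) = 0 ↔ n ∣ j := fun j => ZMod.natCast_eq_zero_iff j n
  have hone : m = 1 → NW W = 1 := by
    intro h1
    apply NW_one
    intro h hh
    rw [← ZMod.natCast_zmod_val h, hper] at hh
    rw [← ZMod.natCast_zmod_val h, hcast]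
    rw [h1, mul_one] at hm
    exact (dvd_of_eq hm).trans hh
  have hp1 : m ≠ 1 → (p : ZMod n) ≠ 0 := by
    intro h1 h
    rw [hcast] at h
    have := Nat.le_of_dvd hp0 h
    have : p * 2 ≤ p * m := Nat.mul_le_mul_left _ (by omega)
    omega
  rcases sp_cases W p 0 with hs | hs
  · simp only [hs, one_pow]
    rw [mob_one m hm0]
    by_cases h1 : m = 1
    · rw [hone h1]; simp [h1]
    · rw [NW_zero W p hpp (hp1 h1) hs]; simp [h1]
  · simp only [hs, pow_add]
    have : ∀ d : ℕ, ArithmeticFunction.moebius d * ((-1 : ℤ) ^ m * (-1) ^ (m / d)) =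
      (-1) ^ m * (ArithmeticFunction.moebius d * (-1) ^ (m / d)) := fun d => by ring
    rw [Finset.sum_congr rfl fun d _ => this d, ← Finset.mul_sum, mob_neg m hm0]
    by_cases h1 : m = 1
    · rw [hone h1]; simp [h1]
    · by_cases h2 : m = 2
      · rw [NW_two W p (by rw [hm, h2]; ring) hper hs]; simp [h2]
      · rw [NW_zero W (p * 2) ((hper _).2 ⟨2, rfl⟩) ?_ (by rw [sp_mul W p hpp, hs]; norm_num)]
        · simp [h1, h2]
        · intro h
          rw [hcast] at h
          have := Nat.le_of_dvd (by omega) h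
          have : p * 3 ≤ p * m := Nat.mul_le_mul_left _ (by omega)
          omega

/-! Part 6: sums over words -/

lemma prod_mod {R : Type*} [CommRing R] (F : ℕ → R) (q d : ℕ) :
    ∏ i ∈ Finset.range (q * d), F (i % q) = ∏ i ∈ Finset.range q, F i ^ d := by
  induction d with
  | zero => simp
  | succ d ih =>
    rw [mul_add, mul_one, Finset.prod_range_add, ih, ← Finset.prod_mul_distrib]
    refine Finset.prod_congr rfl fun i hi => ?_
    rw [Nat.mul_add_mod, Nat.mod_eq_of_lt (Finset.mem_range.1 hi), pow_succ]

lemma prod_zmod {R : Type*} [CommRing R] (n : ℕ) [NeZero n] (F : ℕ → R) :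
    ∏ a : ZMod n, F a.val = ∏ i ∈ Finset.range n, F i := by
  symm
  apply Finset.prod_bij' (fun (i : ℕ) _ => (i : ZMod n)) (fun (a : ZMod n) _ => a.val)
  · intros; simp
  · intro a _; simpa using ZMod.val_lt a
  · intro i hi; exact ZMod.val_natCast_of_lt (Finset.mem_range.1 hi)
  · intro a _; simp
  · intro i hi; rw [ZMod.val_natCast_of_lt (Finset.mem_range.1 hi)]

lemma per_mul {n : ℕ} [NeZero n] (W : ZMod n → ℕ) (q : ZMod n) (hp : per W q) (i : ℕ) :
    per W (q * i) := by
  induction i with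
  | zero => intro a; simp
  | succ i ih =>
    intro a
    push_cast
    rw [mul_add, mul_one, ← add_assoc, hp, ih]

lemma sum_periodic {R : Type*} [CommRing R] (y : R) (n q d L : ℕ) [NeZero n] (hn : n = q * d) :
    (∑ W : ZMod n → Fin L, if per (fun a => (W a : ℕ)) (q : ZMod n) then
      (∏ a, wt y (W a)) * ((sp (fun a => (W a : ℕ)) q 0 : ℤ) : R) ^ (d + 1) else 0) =
    (∑ c : Fin L, wt y c ^ d * ((sg c : ℤ) : R) ^ (d + 1)) ^ q := by
  have hn0 := NeZero.pos n
  have hq : 0 < q := by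
    rcases Nat.eq_zero_or_pos q with h | h
    · rw [h] at hn; omega
    · exact h
  have hqn : q ≤ n := Nat.le_of_dvd hn0 ⟨d, hn⟩
  rw [Fintype.sum_pow, ← Finset.sum_filter]
  symm
  apply Finset.sum_bij' (fun (U : Fin q → Fin L) _ => (fun a : ZMod n => U ⟨a.val % q, Nat.mod_lt _ hq⟩))
    (fun (W : ZMod n → Fin L) _ => (fun i : Fin q => W ((i : ℕ) : ZMod n)))
  · intro U _
    simp only [Finset.mem_filter, Finset.mem_univ, true_and]
    intro a
    have : (a + (q : ZMod n)).val % q = a.val % q := by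
      rw [ZMod.val_add, ZMod.val_natCast, Nat.mod_mod_of_dvd _ ⟨d, hn⟩, Nat.add_mod,
        Nat.mod_mod_of_dvd _ ⟨d, hn⟩]
      simp
    simp only [this]
  · intros; simp
  · intro U _
    funext i
    simp only
    congr 1
    apply Fin.ext
    simp only
    rw [ZMod.val_natCast_of_lt (by omega), Nat.mod_eq_of_lt i.2]
  · intro W hW
    simp only [Finset.mem_filter, Finset.mem_univ, true_and] at hW
    funext a
    simp only
    have h1 := per_mul _ _ hW (a.val / q) ((a.val % q : ℕ) : ZMod n)
    simp only [Fin.val_inj] at h1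
    rw [← h1]
    congr 1
    have h2 := Nat.mod_add_div a.val q
    conv_rhs => rw [← ZMod.natCast_zmod_val a, ← h2]
    push_cast
    rfl
  · intro U _
    set V : ℕ → Fin L := fun i => if h : i < q then U ⟨i, h⟩ else U ⟨0, hq⟩ with hV
    have hVU : ∀ i : ℕ, ∀ h, U ⟨i % q, h⟩ = V (i % q) := by
      intro i h
      simp only [hV]
      rw [dif_pos h]
    have hVU' : ∀ i : Fin q, U i = V i := by
      intro i
      simp only [hV]
      rw [dif_pos i.2]
    simp only [hVU]
    have e1 : ∏ a : ZMod n, wt y (V (a.val % q)) = ∏ i ∈ Finset.range q, wt y (V i) ^ d := by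
      rw [prod_zmod n (fun x => wt y (V (x % q)))]
      rw [← prod_mod (fun x => wt y (V x))]
      rw [← hn]
    have e2 : sp (fun a : ZMod n => (V (a.val % q) : ℕ)) q 0 = ∏ i ∈ Finset.range q, sg (V i) := by
      unfold sp
      refine Finset.prod_congr rfl fun i hi => ?_
      have hi := Finset.mem_range.1 hi
      rw [zero_add]
      beta_reduce
      rw [ZMod.val_natCast_of_lt (by omega), Nat.mod_eq_of_lt hi]
    rw [e1, e2]
    simp only [hVU']
    rw [Fin.prod_univ_eq_prod_range (fun i => wt y (V i) ^ d * ((sg (V i) : ℤ) : R) ^ (d + 1)),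
      Finset.prod_mul_distrib]
    push_cast
    rw [← Finset.prod_pow]

lemma letter_sum {R : Type*} [CommRing R] (y : R) (k d : ℕ) :
    ∑ c : Fin (2 * k), wt y c ^ d * ((sg c : ℤ) : R) ^ (d + 1) = k * (1 - (-y) ^ d) := by
  have : ∀ c : Fin (2 * k), wt y c ^ d * ((sg c : ℤ) : R) ^ (d + 1) =
    if Even (c : ℕ) then - (-y) ^ d else 1 := by
    intro c
    unfold wt sg
    split_ifs
    · push_cast
      rw [pow_succ, neg_pow y]; ring
    · simp
  rw [Finset.sum_congr rfl fun c _ => this c, sum_parity]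
  ring

/-! Part 7: summing over the conjugacy class -/

lemma isCyclic_iff (m : ℕ) (π : Equiv.Perm (Fin (m + 2))) :
    IsCyclicPerm (m + 2) π ↔ π.cycleType = {m + 2} := by
  unfold IsCyclicPerm fullCycleType
  constructor
  · intro h
    have h0 : m + 2 - π.support.card = 0 := by
      by_contra h0
      have h1 : 1 ∈ ({m + 2} : Multiset ℕ) := by
        rw [← h, Multiset.mem_add]
        right
        rw [Multiset.mem_replicate]
        exact ⟨h0, rfl⟩
      rw [Multiset.mem_singleton] at h1
      omega
    rw [h0] at h
    simpa using h
  · intro h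
    have h1 : π.support.card = m + 2 := by
      rw [← Equiv.Perm.sum_cycleType, h]; simp
    rw [h1, h]
    simp

lemma mem_cyclicSet_iff (m : ℕ) (π : Equiv.Perm (Fin (m + 1))) :
    π ∈ cyclicSet (m + 1) ↔ IsConj (finRotate (m + 1)) π := by
  unfold cyclicSet
  rw [Finset.mem_filter]
  simp only [Finset.mem_univ, true_and]
  rw [Equiv.Perm.isConj_iff_cycleType_eq]
  cases m with
  | zero =>
    have h1 : π = 1 := Equiv.ext fun x => Subsingleton.elim (α := Fin 1) _ _
    have h2 : finRotate (0 + 1) = 1 := Equiv.ext fun x => Subsingleton.elim (α := Fin 1) _ _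
    rw [h1, h2]
    simp [IsCyclicPerm, fullCycleType]
  | succ m =>
    rw [isCyclic_iff, cycleType_finRotate]
    exact eq_comm

lemma card_cent (m : ℕ) :
    (Finset.univ.filter fun τ : Equiv.Perm (Fin (m + 1)) =>
      τ * finRotate (m + 1) * τ⁻¹ = finRotate (m + 1)).card = m + 1 := by
  have h := Equiv.Perm.nat_card_centralizer (finRotate (m + 1))
  have h2 : Nat.card (Subgroup.centralizer {finRotate (m + 1)}) =
      (Finset.univ.filter fun τ : Equiv.Perm (Fin (m + 1)) =>
      τ * finRotate (m + 1) * τ⁻¹ = finRotate (m + 1)).card := by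
    refine Nat.subtype_card _ fun τ => ?_
    rw [Finset.mem_filter, mul_inv_eq_iff_eq_mul]
    simp only [Finset.mem_univ, true_and]
    exact Subgroup.mem_centralizer_singleton_iff.symm
  rw [← h2, h]
  cases m with
  | zero =>
    have h2 : finRotate (0 + 1) = 1 := Equiv.ext fun x => Subsingleton.elim (α := Fin 1) _ _
    rw [h2]
    simp
  | succ m =>
    rw [cycleType_finRotate]
    simp

lemma cyc_sum {R : Type*} [CommRing R] (m : ℕ) (f : Equiv.Perm (Fin (m + 1)) → R) :
    ∑ σ : Equiv.Perm (Fin (m + 1)), f (σ * finRotate (m + 1) * σ⁻¹) =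
      ((m + 1 : ℕ) : R) * ∑ π ∈ cyclicSet (m + 1), f π := by
  rw [← Finset.sum_fiberwise_of_maps_to (t := cyclicSet (m + 1))
    (g := fun σ => σ * finRotate (m + 1) * σ⁻¹)]
  · rw [Finset.mul_sum]
    refine Finset.sum_congr rfl fun π hπ => ?_
    rw [Finset.sum_congr rfl (g := fun _ => f π) (by
      intro σ hσ
      rw [(Finset.mem_filter.1 hσ).2])]
    rw [Finset.sum_const, nsmul_eq_mul]
    congr 2
    refine Eq.trans ?_ (card_cent m)
    rw [mem_cyclicSet_iff, isConj_iff] at hπ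
    obtain ⟨s, hs⟩ := hπ
    apply Finset.card_bij' (fun σ _ => s⁻¹ * σ) (fun τ _ => s * τ)
    · intro σ hσ
      simp only [Finset.mem_filter, Finset.mem_univ, true_and] at hσ ⊢
      rw [← hs] at hσ
      calc s⁻¹ * σ * finRotate (m + 1) * (s⁻¹ * σ)⁻¹
          = s⁻¹ * (σ * finRotate (m + 1) * σ⁻¹) * s := by group
        _ = _ := by rw [hσ]; group
    · intro τ hτ
      simp only [Finset.mem_filter, Finset.mem_univ, true_and] at hτ ⊢
      rw [← hs]
      calc s * τ * finRotate (m + 1) * (s * τ)⁻¹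
          = s * (τ * finRotate (m + 1) * τ⁻¹) * s⁻¹ := by group
        _ = _ := by rw [hτ]
    · intros; simp
    · intros; simp
  · intro σ _
    rw [mem_cyclicSet_iff, isConj_iff]
    exact ⟨σ, rfl⟩

/-! Part 8: bridge -/

def asZ {m : ℕ} (σ : Equiv.Perm (Fin (m + 1))) : ZMod (m + 1) ≃ Fin (m + 1) := σ

def asZE (m : ℕ) : Equiv.Perm (Fin (m + 1)) ≃ (ZMod (m + 1) ≃ Fin (m + 1)) := Equiv.refl _

lemma om_conj {R : Type*} [CommRing R] (y : R) (m k : ℕ) (σ : Equiv.Perm (Fin (m + 1))) :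
    Om y (σ * finRotate (m + 1) * σ⁻¹) k =
      ∑ W : ZMod (m + 1) → Fin (2 * k),
        if Good (n := m + 1) (fun a => (W a : ℕ)) (asZ σ) then ∏ a, wt y (W a) else 0 := by
  unfold Om
  refine (Fintype.sum_equiv (Equiv.arrowCongr (asZ σ) (Equiv.refl (Fin (2 * k)))) _ _ ?_).symm
  intro W
  have hp : ∏ a, wt y (W a) = ∏ i : Fin (m + 1), wt y (W (σ⁻¹ i)) :=
    (Fintype.prod_equiv (asZ σ).symm _ _ fun _ => rfl).symm
  have hg : Good (n := m + 1) (fun a => (W a : ℕ)) (asZ σ) ↔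
      cp (σ * finRotate (m + 1) * σ⁻¹) (fun i => W (σ⁻¹ i)) := by
    unfold Good cp StrictMono
    simp only [Prod.Lex.toLex_lt_toLex]
    constructor
    · intro h a b hab
      have := h (σ⁻¹ a) (σ⁻¹ b) (by
        have e : ∀ x, asZ σ (σ⁻¹ x) = x := fun x => σ.apply_symm_apply x
        rw [e, e]
        exact hab)
      simp only [Equiv.Perm.mul_apply, finRotate_apply]
      rcases this with h | ⟨h, h'⟩
      · exact Or.inl h
      · refine Or.inr ⟨h, ?_⟩
        rw [← h]
        exact h'
    · intro h a b hab
      have := h hab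
      simp only [Equiv.Perm.mul_apply, finRotate_apply] at this
      have e : ∀ x, σ⁻¹ (asZ σ x) = x := fun x => σ.symm_apply_apply x
      rw [e a, e b] at this
      rcases this with h | ⟨h, h'⟩
      · exact Or.inl h
      · refine Or.inr ⟨h, ?_⟩
        rw [← h] at h'
        exact h'
  rw [hp]
  simp only [hg]
  rfl

lemma om_total {R : Type*} [CommRing R] (y : R) (m k : ℕ) :
    ((m + 1 : ℕ) : R) * ∑ π ∈ cyclicSet (m + 1), Om y π k =
      ∑ d ∈ (m + 1).divisors, ((ArithmeticFunction.moebius d : ℤ) : R) *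
        (k * (1 - (-y) ^ d)) ^ ((m + 1) / d) := by
  rw [← cyc_sum m (fun π => Om y π k)]
  simp only [om_conj]
  rw [Finset.sum_comm]
  have h1 : ∀ W : ZMod (m + 1) → Fin (2 * k),
      (∑ σ : Equiv.Perm (Fin (m + 1)),
        if Good (n := m + 1) (fun a => (W a : ℕ)) (asZ σ) then ∏ a, wt y (W a) else 0) =
      ∑ d ∈ (m + 1).divisors, ((ArithmeticFunction.moebius d : ℤ) : R) *
        (if per (fun a => (W a : ℕ)) (((m + 1) / d : ℕ) : ZMod (m + 1)) then
      (∏ a, wt y (W a)) * ((sp (fun a => (W a : ℕ)) ((m + 1) / d) 0 : ℤ) : R) ^ (d + 1) else 0) := by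
    intro W
    have h2 := NW_eq (n := m + 1) (fun a => (W a : ℕ))
    have h3 : (∑ σ : Equiv.Perm (Fin (m + 1)),
        if Good (n := m + 1) (fun a => (W a : ℕ)) (asZ σ) then ∏ a, wt y (W a) else 0) =
        ((NW (n := m + 1) (fun a => (W a : ℕ)) : ℤ) : R) * ∏ a, wt y (W a) := by
      refine (Fintype.sum_equiv (asZE m) _ (fun σ => if Good (n := m + 1) (fun a => (W a : ℕ)) σ then
        ∏ a, wt y (W a) else 0) (fun _ => rfl)).trans ?_
      rw [← Finset.sum_filter, Finset.sum_const, nsmul_eq_mul, Int.cast_natCast]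
      rfl
    rw [h3, h2, Int.cast_sum, Finset.sum_mul]
    refine Finset.sum_congr rfl fun d _ => ?_
    split_ifs
    · push_cast; ring
    · simp
  rw [Finset.sum_congr rfl fun W _ => h1 W, Finset.sum_comm]
  refine Finset.sum_congr rfl fun d hd => ?_
  rw [← Finset.mul_sum]
  have hdn := (Nat.mem_divisors.1 hd).1
  rw [sum_periodic y (m + 1) ((m + 1) / d) d (2 * k) (Nat.div_mul_cancel hdn).symm, letter_sum]

/-! Part 9: core identity -/

lemma core_poly {K : Type*} [Field K] (y : K) (m : ℕ) :
    Polynomial.C (((m + 1 : ℕ) : K)) * ∑ π ∈ cyclicSet (m + 1), Rp y m π =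
      ∑ d ∈ (m + 1).divisors,
        Polynomial.C (((ArithmeticFunction.moebius d : ℤ) : K) * (1 - (-y) ^ d) ^ ((m + 1) / d)) *
          (1 - Polynomial.X) ^ (m + 1 - (m + 1) / d) *
          ∑ π : Equiv.Perm (Fin ((m + 1) / d)), Polynomial.X ^ (des ((m + 1) / d) π + 1) := by
  apply Polynomial.coe_injective K
  have hL : ((Polynomial.C (((m + 1 : ℕ) : K)) * ∑ π ∈ cyclicSet (m + 1), Rp y m π : Polynomial K) :
      PowerSeries K) =
      PowerSeries.mk (fun k => ((m + 1 : ℕ) : K) * ∑ π ∈ cyclicSet (m + 1), Om y π k) *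
        (1 - PowerSeries.X) ^ (m + 2) := by
    rw [Polynomial.coe_mul, Polynomial.coe_C]
    have : ((∑ π ∈ cyclicSet (m + 1), Rp y m π : Polynomial K) : PowerSeries K) =
        ∑ π ∈ cyclicSet (m + 1), (Rp y m π : PowerSeries K) :=
      map_sum (Polynomial.coeToPowerSeries.ringHom (R := K)) _ _
    rw [this, Finset.sum_congr rfl fun π _ => (Om_ps y m π).symm, ← Finset.sum_mul, ← mul_assoc]
    congr 1
    ext k
    rw [PowerSeries.coeff_C_mul, PowerSeries.coeff_mk, map_sum]
    simp only [PowerSeries.coeff_mk]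
  rw [hL]
  have hR : PowerSeries.mk (fun k => ((m + 1 : ℕ) : K) * ∑ π ∈ cyclicSet (m + 1), Om y π k) =
      ∑ d ∈ (m + 1).divisors,
        PowerSeries.C (((ArithmeticFunction.moebius d : ℤ) : K) * (1 - (-y) ^ d) ^ ((m + 1) / d)) *
        PowerSeries.mk (fun k => (k : K) ^ ((m + 1) / d)) := by
    ext k
    rw [PowerSeries.coeff_mk, om_total, map_sum]
    refine Finset.sum_congr rfl fun d _ => ?_
    rw [PowerSeries.coeff_C_mul, PowerSeries.coeff_mk, mul_pow]
    ring
  rw [hR, Finset.sum_mul]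
  have : ∀ (f : ℕ → Polynomial K) (s : Finset ℕ), ((∑ d ∈ s, f d : Polynomial K) : PowerSeries K) =
        ∑ d ∈ s, (f d : PowerSeries K) := fun f s =>
      map_sum (Polynomial.coeToPowerSeries.ringHom (R := K)) _ _
  rw [this]
  refine Finset.sum_congr rfl fun d hd => ?_
  have hdn := (Nat.mem_divisors.1 hd).1
  have hle : (m + 1) / d ≤ m + 1 := Nat.div_le_self _ _
  have hpos : 0 < (m + 1) / d := Nat.div_pos (Nat.le_of_dvd (by omega) hdn) (Nat.pos_of_dvd_of_pos hdn (by omega))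
  obtain ⟨e, he⟩ : ∃ e, (m + 1) / d = e + 1 := ⟨(m + 1) / d - 1, by omega⟩
  rw [he] at hle ⊢
  rw [Polynomial.coe_mul, Polynomial.coe_mul, Polynomial.coe_C, Polynomial.coe_pow, Polynomial.coe_sub,
    Polynomial.coe_one, Polynomial.coe_X, ← worp_ps K e]
  have h2 : m + 2 = (m + 1 - (e + 1)) + (e + 2) := by omega
  conv_lhs => rw [h2]
  rw [pow_add]
  ring

lemma core {K : Type*} [Field K] [CharZero K] (y t : K) (h1 : 1 + y ≠ 0) (h2 : y + t ≠ 0)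
    (h3 : 1 + y * t ≠ 0) (m : ℕ) :
    (∑ π ∈ cyclicSet (m + 1),
        ((1 + y) ^ 2 * t / ((y + t) * (1 + y * t))) ^ (pk (m + 1) π + 1)
          * ((y + t) / (1 + y * t)) ^ (des (m + 1) π + 1))
      = ((1 + y) / (((m + 1 : ℕ) : K) * (1 + y * t) ^ (m + 1 + 1)))
        * ∑ d ∈ (m + 1).divisors,
            ((ArithmeticFunction.moebius d : ℤ) : K)
              * (1 - (-y) ^ d) ^ ((m + 1) / d) * (1 - t) ^ (m + 1 - (m + 1) / d)
              * ∑ π : Equiv.Perm (Fin ((m + 1) / d)), t ^ (des ((m + 1) / d) π + 1) := by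
  have h := congrArg (Polynomial.eval t) (core_poly y m)
  simp only [Polynomial.eval_mul, Polynomial.eval_C, Polynomial.eval_finsetSum, Polynomial.eval_pow,
    Polynomial.eval_sub, Polynomial.eval_one, Polynomial.eval_X] at h
  rw [← h, Finset.sum_congr rfl fun π _ => Rp_eval y t h1 h2 h3 m π, ← Finset.mul_sum]
  have hn : ((m + 1 : ℕ) : K) ≠ 0 := by exact_mod_cast Nat.succ_ne_zero m
  field_simp

lemma alg_ne (p : MvPolynomial (Fin 2) ℚ) (v : Fin 2 → ℚ) (h : MvPolynomial.eval v p ≠ 0) :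
    algebraMap (MvPolynomial (Fin 2) ℚ) (FractionRing (MvPolynomial (Fin 2) ℚ)) p ≠ 0 := by
  intro h0
  rw [map_eq_zero_iff _ (IsFractionRing.injective _ _)] at h0
  rw [h0] at h
  simp at h

theorem stmt2 (n : ℕ) (hn : 1 ≤ n) :
    letI K := FractionRing (MvPolynomial (Fin 2) ℚ)
    letI y : K := algebraMap (MvPolynomial (Fin 2) ℚ) K (MvPolynomial.X 0)
    letI t : K := algebraMap (MvPolynomial (Fin 2) ℚ) K (MvPolynomial.X 1)
    (∑ π ∈ cyclicSet n,
        ((1 + y) ^ 2 * t / ((y + t) * (1 + y * t))) ^ (pk n π + 1)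
          * ((y + t) / (1 + y * t)) ^ (des n π + 1))
      = ((1 + y) / ((n : K) * (1 + y * t) ^ (n + 1)))
        * ∑ d ∈ n.divisors,
            ((ArithmeticFunction.moebius d : ℤ) : K)
              * (1 - (-y) ^ d) ^ (n / d) * (1 - t) ^ (n - n / d)
              * Polynomial.eval₂
                  ((algebraMap (MvPolynomial (Fin 2) ℚ) K).comp MvPolynomial.C) t
                  (eulerianA (n / d)) := by
  obtain ⟨m, rfl⟩ : ∃ m, n = m + 1 := ⟨n - 1, by omega⟩
  have : CharZero (FractionRing (MvPolynomial (Fin 2) ℚ)) :=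
    charZero_of_injective_algebraMap (IsFractionRing.injective (MvPolynomial (Fin 2) ℚ) _)
  have h1 := alg_ne (1 + MvPolynomial.X 0) (fun _ => 1) (by simp)
  have h2 := alg_ne (MvPolynomial.X 0 + MvPolynomial.X 1) (fun _ => 1) (by simp)
  have h3 := alg_ne (1 + MvPolynomial.X 0 * MvPolynomial.X 1) (fun _ => 1) (by simp)
  simp only [map_add, map_mul, map_one] at h1 h2 h3
  have h := core _ _ h1 h2 h3 m
  refine h.trans ?_
  congr 1
  refine Finset.sum_congr rfl fun d _ => ?_
  congr 1
  unfold eulerianA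
  rw [Polynomial.eval₂_finsetSum]
  refine Finset.sum_congr rfl fun π _ => ?_
  rw [Polynomial.eval₂_X_pow]

end
end

section
/- Let n ≥ 1. Then the following identity of polynomials in ℚ[t] holds: n · Σ_{π ∈ 𝔠_n} t^{des(π)+1} = Σ_{d ∣ n} μ(d) (1−t)^{n−n/d} A_{n/d}(t). -/
open scoped Classical

noncomputable section

def Compat {n k : ℕ} (π : Equiv.Perm (Fin n)) (f : Fin n → Fin k) : Prop :=
  ∀ i j, i < j → f i ≤ f j ∧ (f i = f j → π i < π j)

def shiftSeq (k : ℕ) (w : ℕ → Fin k) : ℕ → Fin k := fun j => w (j + 1)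

lemma shiftSeq_iter (k : ℕ) (w : ℕ → Fin k) (m j : ℕ) : (shiftSeq k)^[m] w j = w (j + m) := by
  induction m generalizing w with
  | zero => rfl
  | succ m ih =>
    rw [Function.iterate_succ_apply, ih]
    simp only [shiftSeq]
    congr 1

def itin {n k : ℕ} (π : Equiv.Perm (Fin n)) (f : Fin n → Fin k) (x : Fin n) : ℕ → Fin k :=
  fun j => f ((π ^ j) x)

lemma shift_itin {n k : ℕ} (π : Equiv.Perm (Fin n)) (f : Fin n → Fin k) (x : Fin n) :
    shiftSeq k (itin π f x) = itin π f (π x) := by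
  funext j
  simp [shiftSeq, itin, pow_succ]

lemma shift_iter_itin {n k : ℕ} (π : Equiv.Perm (Fin n)) (f : Fin n → Fin k) (x : Fin n) (m : ℕ) :
    (shiftSeq k)^[m] (itin π f x) = itin π f ((π ^ m) x) := by
  funext j
  rw [shiftSeq_iter]
  simp [itin, pow_add]

def CycP {n : ℕ} (π : Equiv.Perm (Fin n)) : Prop := π.IsCycleOn ((Finset.univ : Finset (Fin n)) : Set (Fin n))

lemma itin_strictMono {n k : ℕ} {π : Equiv.Perm (Fin n)} {f : Fin n → Fin k} (hc : CycP π)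
    (h : Compat π f) : StrictMono (fun x => toLex (itin π f x)) := by
  intro x y hxy
  have key : ∀ j, (∀ i < j, itin π f x i = itin π f y i) → (π ^ j) x < (π ^ j) y := by
    intro j
    induction j with
    | zero => intro _; simpa using hxy
    | succ j ih =>
      intro hj
      have h1 := ih (fun i hi => hj i (by omega))
      have h2 := (h _ _ h1).2 (hj j (by omega))
      simpa [pow_succ'] using h2
  by_cases he : itin π f x = itin π f y
  · exfalso
    have key2 : ∀ j, (π ^ j) x < (π ^ j) y := fun j => key j (fun i _ => by rw [he])
    obtain ⟨m, -, hm⟩ := hc.exists_pow_eq (Finset.mem_univ x) (Finset.mem_univ y)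
    have mono : StrictMono (fun t : ℕ => (π ^ (m * t)) x) := by
      apply strictMono_nat_of_lt_succ
      intro t
      have := key2 (m * t)
      rw [← hm, ← Equiv.Perm.mul_apply, ← pow_add] at this
      simpa [mul_add] using this
    have := mono.injective.ne (show (0:ℕ) ≠ orderOf π from (orderOf_pos π).ne)
    apply this
    simp [mul_comm m, pow_mul, pow_orderOf_eq_one]
  · have hex : ∃ j, itin π f x j ≠ itin π f y j := by
      by_contra hcon
      push Not at hcon
      exact he (funext hcon)
    refine ⟨Nat.find hex, ?_, ?_⟩
    · intro i hi
      have := Nat.find_min hex hi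
      push Not at this
      exact this
    · have hlt := key (Nat.find hex) (fun i hi => by
        have := Nat.find_min hex hi
        push Not at this
        exact this)
      exact lt_of_le_of_ne (h _ _ hlt).1 (Nat.find_spec hex)

lemma itin_injective {n k : ℕ} {π : Equiv.Perm (Fin n)} {f : Fin n → Fin k} (hc : CycP π)
    (h : Compat π f) : Function.Injective (fun x => itin π f x) := by
  intro x y hxy
  exact (itin_strictMono hc h).injective (congrArg toLex hxy)

lemma itin_minimalPeriod {n k : ℕ} {π : Equiv.Perm (Fin n)} {f : Fin n → Fin k} (hc : CycP π)
    (h : Compat π f) (x : Fin n) : Function.minimalPeriod (shiftSeq k) (itin π f x) = n := by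
  apply Nat.dvd_right_iff_eq.mp
  intro m
  rw [← Function.isPeriodicPt_iff_minimalPeriod_dvd, Function.IsPeriodicPt, Function.IsFixedPt,
    shift_iter_itin, (itin_injective hc h).eq_iff, hc.pow_apply_eq (Finset.mem_univ x)]
  simp

lemma itin_range {n k : ℕ} {π : Equiv.Perm (Fin n)} {f : Fin n → Fin k} (hc : CycP π) (x : Fin n) :
    Set.range (fun y => toLex (itin π f y)) = Set.range (fun m => toLex ((shiftSeq k)^[m] (itin π f x))) := by
  ext w
  constructor
  · rintro ⟨y, rfl⟩
    obtain ⟨m, -, hm⟩ := hc.exists_pow_eq (Finset.mem_univ x) (Finset.mem_univ y)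
    exact ⟨m, by simp only [shift_iter_itin, hm]⟩
  · rintro ⟨m, rfl⟩
    exact ⟨(π ^ m) x, by simp only [shift_iter_itin]⟩

lemma itin_inj {n k : ℕ} {π π' : Equiv.Perm (Fin n)} {f f' : Fin n → Fin k} (hc : CycP π)
    (h : Compat π f) (hc' : CycP π') (h' : Compat π' f') (x x' : Fin n)
    (he : itin π f x = itin π' f' x') : π = π' ∧ f = f' ∧ x = x' := by
  have hW : (fun y => toLex (itin π f y)) = (fun y => toLex (itin π' f' y)) := by
    apply ((itin_strictMono hc h).range_inj (itin_strictMono hc' h')).1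
    rw [itin_range hc x, itin_range hc' x', he]
  have hW' : ∀ y, itin π f y = itin π' f' y := fun y => toLex.injective (congrFun hW y)
  refine ⟨?_, ?_, ?_⟩
  · ext1 y
    apply itin_injective hc h
    change itin π f (π y) = itin π f (π' y)
    rw [← shift_itin, hW', hW', shift_itin]
  · funext y
    have := congrFun (hW' y) 0
    simpa [itin] using this
  · apply itin_injective hc h
    change itin π f x = itin π f x'
    rw [he, hW']

lemma itin_surj {n k : ℕ} (hn : 1 ≤ n) (w : ℕ → Fin k)
    (hw : Function.minimalPeriod (shiftSeq k) w = n) :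
    ∃ (π : Equiv.Perm (Fin n)) (f : Fin n → Fin k) (x : Fin n), CycP π ∧ Compat π f ∧
      itin π f x = w := by
  have hper : (shiftSeq k)^[n] w = w := by
    have := Function.isPeriodicPt_minimalPeriod (shiftSeq k) w
    rw [hw] at this
    exact this
  let R : Finset (Lex (ℕ → Fin k)) := (Finset.range n).image (fun m => toLex ((shiftSeq k)^[m] w))
  have hcard : R.card = n := by
    rw [Finset.card_image_of_injOn, Finset.card_range]
    intro a ha b hb hab
    apply Function.iterate_injOn_Iio_minimalPeriod (f := shiftSeq k) (x := w)
    · simpa [hw] using ha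
    · simpa [hw] using hb
    · exact toLex.injective hab
  have hmem : ∀ m, toLex ((shiftSeq k)^[m] w) ∈ R := by
    intro m
    apply Finset.mem_image.2
    refine ⟨m % n, Finset.mem_range.2 (Nat.mod_lt _ hn), ?_⟩
    rw [← hw, Function.iterate_mod_minimalPeriod_eq]
  let e := R.orderIsoOfFin hcard
  let E : Fin n → (ℕ → Fin k) := fun y => ofLex (e y).1
  have hE : ∀ y, ∃ m, E y = (shiftSeq k)^[m] w := by
    intro y
    obtain ⟨m, -, hm⟩ := Finset.mem_image.1 (e y).2
    exact ⟨m, by simp only [E, ← hm]; rfl⟩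
  have hEm : ∀ m, ∃ y, E y = (shiftSeq k)^[m] w := by
    intro m
    refine ⟨e.symm ⟨_, hmem m⟩, ?_⟩
    simp [E]
  have hEinj : Function.Injective E := by
    intro a b hab
    exact e.injective (Subtype.ext hab)
  have hS : ∀ y, ∃ z, E z = shiftSeq k (E y) := by
    intro y
    obtain ⟨m, hm⟩ := hE y
    obtain ⟨z, hz⟩ := hEm (m + 1)
    exact ⟨z, by rw [hz, hm, Function.iterate_succ_apply']⟩
  choose p hp using hS
  have hpsurj : Function.Surjective p := by
    intro z
    obtain ⟨m, hm⟩ := hE z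
    obtain ⟨y, hy⟩ := hEm (m + (n - 1))
    refine ⟨y, hEinj ?_⟩
    rw [hp, hy, hm, ← Function.iterate_succ_apply' (shiftSeq k),
      show (m + (n-1)).succ = m + n by omega, Function.iterate_add_apply, hper]
  let π : Equiv.Perm (Fin n) := Equiv.ofBijective p (Finite.injective_iff_bijective.1 (Finite.injective_iff_surjective.2 hpsurj))
  have hπ : ∀ y, E (π y) = shiftSeq k (E y) := hp
  have hπm : ∀ m y, E ((π ^ m) y) = (shiftSeq k)^[m] (E y) := by
    intro m
    induction m with
    | zero => intro y; rfl
    | succ m ih => intro y; rw [pow_succ', Equiv.Perm.mul_apply, hπ, ih, Function.iterate_succ_apply']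
  obtain ⟨x, hx⟩ := hEm 0
  simp only [Function.iterate_zero, id] at hx
  have hreach : ∀ y, ∃ m : ℕ, (π ^ m) x = y := by
    intro y
    obtain ⟨m, hm⟩ := hE y
    exact ⟨m, hEinj (by rw [hπm, hx, hm])⟩
  refine ⟨π, fun y => E y 0, x, ⟨?_, ?_⟩, ?_, ?_⟩
  · simp
  · intro a _ b _
    obtain ⟨i, rfl⟩ := hreach a
    obtain ⟨j, rfl⟩ := hreach b
    have h1 : π.SameCycle x ((π ^ i) x) := ⟨i, by simp⟩
    have h2 : π.SameCycle x ((π ^ j) x) := ⟨j, by simp⟩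
    exact h1.symm.trans h2
  · intro i j hij
    have hlt : toLex (E i) < toLex (E j) := e.strictMono hij
    obtain ⟨m, hm1, hm2⟩ := hlt
    change ∀ l < m, E i l = E j l at hm1
    change E i m < E j m at hm2
    rcases m with _ | m
    · exact ⟨hm2.le, fun h => absurd h hm2.ne⟩
    · refine ⟨(hm1 0 (by omega)).le, fun _ => ?_⟩
      have : toLex (E (π i)) < toLex (E (π j)) := by
        refine ⟨m, ?_, ?_⟩
        · intro l hl
          change E (π i) l = E (π j) l
          rw [hπ, hπ]
          exact hm1 (l+1) (by omega)
        · change E (π i) m < E (π j) m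
          rw [hπ, hπ]
          exact hm2
      exact e.lt_iff_lt.1 this
  · funext j
    simp only [itin]
    rw [hπm, hx, shiftSeq_iter, zero_add]

lemma card_prim {n : ℕ} (k : ℕ) (hn : 1 ≤ n) :
    n * ∑ π ∈ (Finset.univ.filter fun π : Equiv.Perm (Fin n) => CycP π), Nat.card {f : Fin n → Fin k // Compat π f}
      = Nat.card {w : ℕ → Fin k // Function.minimalPeriod (shiftSeq k) w = n} := by
  let Φ : Fin n × (Σ π : {π : Equiv.Perm (Fin n) // CycP π}, {f : Fin n → Fin k // Compat π.1 f}) →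
      {w : ℕ → Fin k // Function.minimalPeriod (shiftSeq k) w = n} :=
    fun t => ⟨itin t.2.1.1 t.2.2.1 t.1, itin_minimalPeriod t.2.1.2 t.2.2.2 t.1⟩
  have hΦ : Function.Bijective Φ := by
    constructor
    · rintro ⟨x, ⟨π, hc⟩, ⟨f, h⟩⟩ ⟨x', ⟨π', hc'⟩, ⟨f', h'⟩⟩ he
      obtain ⟨rfl, rfl, rfl⟩ := itin_inj hc h hc' h' x x' (congrArg Subtype.val he)
      rfl
    · rintro ⟨w, hw⟩
      obtain ⟨π, f, x, hc, h, he⟩ := itin_surj hn w hw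
      exact ⟨⟨x, ⟨π, hc⟩, ⟨f, h⟩⟩, Subtype.ext he⟩
  rw [← Nat.card_congr (Equiv.ofBijective Φ hΦ), Nat.card_prod, Nat.card_sigma, Nat.card_fin]
  congr 1
  rw [Finset.sum_subtype (p := fun π => CycP π)]
  intro x; simp

lemma card_all (n k : ℕ) :
    ∑ π : Equiv.Perm (Fin n), Nat.card {f : Fin n → Fin k // Compat π f} = k ^ n := by
  let Φ : (Σ π : Equiv.Perm (Fin n), {f : Fin n → Fin k // Compat π f}) → (Fin n → Fin k) :=
    fun t => t.2.1 ∘ t.1.symm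
  have hs : ∀ t, t.1 = Tuple.sort (Φ t) := by
    rintro ⟨π, f, h⟩
    rw [Tuple.eq_sort_iff]
    simp only [Φ]
    constructor
    · intro i j hij
      rcases hij.eq_or_lt with rfl | hij
      · rfl
      · simpa using (h i j hij).1
    · intro i j hij he
      exact (h i j hij).2 (by simpa using he)
  have hΦ : Function.Bijective Φ := by
    constructor
    · intro t t' he
      have h1 := hs t
      rw [he, ← hs t'] at h1
      obtain ⟨π, f, h⟩ := t
      obtain ⟨π', f', h'⟩ := t'
      simp only at h1
      subst h1
      have : f = f' := by
        funext i
        have := congrFun he (π i)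
        simpa [Φ] using this
      subst this
      rfl
    · intro v
      obtain ⟨h1, h2⟩ := (Tuple.eq_sort_iff (f := v)).1 rfl
      refine ⟨⟨Tuple.sort v, v ∘ Tuple.sort v, ?_⟩, ?_⟩
      · intro i j hij
        exact ⟨h1 hij.le, h2 i j hij⟩
      · funext i
        simp [Φ]
  have := Nat.card_congr (Equiv.ofBijective Φ hΦ)
  rw [Nat.card_sigma] at this
  rw [this]
  simp

def Chn (e : ℕ → ℕ) (n : ℕ) (f : Fin n → ℕ) : Prop :=
  ∀ (i : ℕ) (h : i + 1 < n), f ⟨i, by omega⟩ + e i ≤ f ⟨i + 1, h⟩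

lemma Chn.le {e : ℕ → ℕ} {n : ℕ} {f : Fin n → ℕ} (hf : Chn e n f) (i j : ℕ) (hij : i ≤ j) (hj : j < n) :
    f ⟨i, by omega⟩ ≤ f ⟨j, hj⟩ := by
  induction j, hij using Nat.le_induction with
  | base => exact le_rfl
  | succ j hij ih =>
    have h1 := ih (by omega)
    have h2 := hf j hj
    omega

def chainSet (e : ℕ → ℕ) (n k : ℕ) : Finset (Fin n → ℕ) :=
  (Fintype.piFinset fun _ : Fin n => Finset.range k).filter fun f => Chn e n f

lemma mem_chainSet {e : ℕ → ℕ} {n k : ℕ} {f : Fin n → ℕ} :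
    f ∈ chainSet e n k ↔ (∀ i, f i < k) ∧ Chn e n f := by
  simp [chainSet]

lemma chainSet_succ (e : ℕ → ℕ) (n k : ℕ) (he : e n ≤ 1) :
    (chainSet e (n + 2) (k + 1)).card
      = (chainSet e (n + 2) k).card + (chainSet e (n + 1) (k + 1 - e n)).card := by
  have hinj : Function.Injective (fun f : Fin (n+1) → ℕ => (Fin.snoc f k : Fin (n+2) → ℕ)) := by
    intro f g h
    have := congrArg Fin.init h
    simpa using this
  rw [← Finset.card_image_of_injective (chainSet e (n+1) (k+1-e n)) hinj,
    ← Finset.card_union_of_disjoint]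
  · congr 1
    ext f
    simp only [Finset.mem_union, Finset.mem_image, mem_chainSet]
    constructor
    · rintro ⟨hb, hc⟩
      by_cases hl : f (Fin.last (n+1)) = k
      · right
        refine ⟨Fin.init f, ⟨?_, ?_⟩, ?_⟩
        · intro i
          have h1 := hc.le i.1 n (by omega) (by omega)
          have h2 := hc n (by omega)
          have h3 : f ⟨n + 1, by omega⟩ = k := hl
          change f ⟨i.1, _⟩ < _
          omega
        · intro i h
          exact hc i (by omega)
        · rw [← hl]
          exact Fin.snoc_init_self f
      · left
        refine ⟨fun i => ?_, hc⟩
        have h1 := hc.le i.1 (n+1) (by omega) (by omega)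
        have h2 := hb (Fin.last (n+1))
        have h3 : f ⟨n + 1, by omega⟩ ≠ k := hl
        have h4 : f ⟨n + 1, by omega⟩ < k + 1 := h2
        change f ⟨i.1, _⟩ < _
        omega
    · rintro (⟨hb, hc⟩ | ⟨g, ⟨hb, hc⟩, rfl⟩)
      · exact ⟨fun i => (hb i).trans (by omega), hc⟩
      · constructor
        · intro i
          refine Fin.lastCases ?_ (fun j => ?_) i
          · simp
          · rw [Fin.snoc_castSucc]
            have := hb j
            omega
        · intro i h
          by_cases hi : i = n
          · subst hi
            have := hb (Fin.last i)
            have h1 : (Fin.snoc g k : Fin (i+2) → ℕ) ⟨i, by omega⟩ = g (Fin.last i) :=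
              Fin.snoc_castSucc (α := fun _ => ℕ) k g (Fin.last i)
            have h2 : (Fin.snoc g k : Fin (i+2) → ℕ) ⟨i+1, h⟩ = k :=
              Fin.snoc_last (α := fun _ => ℕ) k g
            rw [h1, h2]
            omega
          · have h1 : (Fin.snoc g k : Fin (n+2) → ℕ) ⟨i, by omega⟩ = g ⟨i, by omega⟩ :=
              Fin.snoc_castSucc (α := fun _ => ℕ) k g ⟨i, by omega⟩
            have h2 : (Fin.snoc g k : Fin (n+2) → ℕ) ⟨i+1, h⟩ = g ⟨i+1, by omega⟩ :=
              Fin.snoc_castSucc (α := fun _ => ℕ) k g ⟨i+1, by omega⟩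
            rw [h1, h2]
            exact hc i (by omega)
  · rw [Finset.disjoint_left]
    intro f hf hf'
    obtain ⟨g, -, rfl⟩ := Finset.mem_image.1 hf'
    have := (mem_chainSet.1 hf).1 (Fin.last (n+1))
    simp at this

lemma card_chainSet (e : ℕ → ℕ) (he : ∀ i, e i ≤ 1) (n k : ℕ) :
    (chainSet e (n + 1) k).card = (n + k - ∑ i ∈ Finset.range n, e i).choose (n + 1) := by
  have hD : ∀ n, ∑ i ∈ Finset.range n, e i ≤ n := fun n => by
    simpa using Finset.sum_le_sum (s := Finset.range n) (fun i _ => he i)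
  induction n generalizing k with
  | zero =>
    have : chainSet e 1 k = Fintype.piFinset fun _ : Fin 1 => Finset.range k := by
      apply Finset.filter_true_of_mem
      intro f _ i h
      omega
    rw [zero_add, this]
    simp
  | succ n ih =>
    induction k with
    | zero =>
      rw [Nat.choose_eq_zero_of_lt (by omega), Finset.card_eq_zero, Finset.eq_empty_iff_forall_notMem]
      intro f hf
      exact absurd ((mem_chainSet.1 hf).1 0) (by omega)
    | succ k ihk =>
      rw [chainSet_succ e n k (he n), ihk, ih, Finset.sum_range_succ]
      have h1 := hD n
      have h2 := he n
      rw [show n + 1 + (k + 1) - (∑ i ∈ Finset.range n, e i + e n)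
        = (n + 1 + k - (∑ i ∈ Finset.range n, e i + e n)) + 1 by omega, Nat.choose_succ_succ, add_comm]
      congr 2
      omega

def desE (n : ℕ) (π : Equiv.Perm (Fin n)) (i : ℕ) : ℕ :=
  if oneLine n π (i + 2) < oneLine n π (i + 1) then 1 else 0

lemma des_eq_s4 (n : ℕ) (π : Equiv.Perm (Fin n)) : des n π = ∑ i ∈ Finset.range (n - 1), desE n π i := by
  unfold des desE
  rw [Finset.card_filter, Finset.sum_bij' (fun i _ => i - 1) (fun i _ => i + 1)]
  · intro a ha
    simp only [Finset.mem_Icc, Finset.mem_range] at *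
    omega
  · intro a ha
    simp only [Finset.mem_Icc, Finset.mem_range] at *
    omega
  · intro a ha
    simp only [Finset.mem_Icc, Finset.mem_range] at *
    omega
  · intro a ha
    simp
  · intro a ha
    simp only [Finset.mem_Icc] at ha
    rw [show a - 1 + 2 = a + 1 by omega, show a - 1 + 1 = a by omega]

lemma oneLine_succ (n : ℕ) (π : Equiv.Perm (Fin n)) (i : ℕ) (h : i < n) :
    oneLine n π (i + 1) = (π ⟨i, h⟩).val + 1 := by
  unfold oneLine
  rw [dif_pos (by omega)]
  rfl

lemma compat_iff {n k : ℕ} (π : Equiv.Perm (Fin n)) (f : Fin n → Fin k) :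
    Compat π f ↔ Chn (desE n π) n (fun i => (f i).val) := by
  constructor
  · intro h i hi
    have h1 := h ⟨i, by omega⟩ ⟨i+1, hi⟩ (by simp)
    have h3 : (f ⟨i, by omega⟩).val ≤ (f ⟨i+1, hi⟩).val := h1.1
    simp only [desE]
    rw [oneLine_succ n π i (by omega), oneLine_succ n π (i+1) (by omega)]
    split_ifs with hd
    · have : f ⟨i, by omega⟩ ≠ f ⟨i+1, hi⟩ := fun he => by
        have := h1.2 he
        rw [Fin.lt_def] at this
        omega
      have h4 := Fin.val_ne_of_ne this
      omega
    · omega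
  · intro h
    have main : ∀ (i j : ℕ) (hij : i + 1 ≤ j) (hj : j < n),
        f ⟨i, by omega⟩ ≤ f ⟨j, hj⟩ ∧ (f ⟨i, by omega⟩ = f ⟨j, hj⟩ → π ⟨i, by omega⟩ < π ⟨j, hj⟩) := by
      have step : ∀ (i : ℕ) (hj : i + 1 < n), f ⟨i, by omega⟩ ≤ f ⟨i+1, hj⟩ ∧
          (f ⟨i, by omega⟩ = f ⟨i+1, hj⟩ → π ⟨i, by omega⟩ < π ⟨i+1, hj⟩) := by
        intro i hi
        have h1 := h i hi
        simp only [desE] at h1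
        rw [oneLine_succ n π i (by omega), oneLine_succ n π (i+1) (by omega)] at h1
        split_ifs at h1 with hd
        · refine ⟨Fin.le_def.2 (by omega), fun he => ?_⟩
          rw [he] at h1
          omega
        · refine ⟨Fin.le_def.2 (by omega), fun _ => lt_of_le_of_ne (Fin.le_def.2 (by omega)) ?_⟩
          intro hh
          have := π.injective hh
          simp at this
      intro i j hij
      induction j, hij using Nat.le_induction with
      | base => exact step i
      | succ j hij ih =>
        intro hj
        have h1 := ih (by omega)
        have h2 := step j hj
        refine ⟨h1.1.trans h2.1, fun he => ?_⟩
        have e1 : f ⟨i, by omega⟩ = f ⟨j, by omega⟩ := le_antisymm h1.1 (he ▸ h2.1)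
        exact (h1.2 e1).trans (h2.2 (e1 ▸ he))
    intro i j hij
    exact main i.1 j.1 hij j.2

lemma card_compat {n : ℕ} (hn : 1 ≤ n) (k : ℕ) (π : Equiv.Perm (Fin n)) :
    Nat.card {f : Fin n → Fin k // Compat π f} = (n - 1 + k - des n π).choose n := by
  obtain ⟨m, rfl⟩ : ∃ m, n = m + 1 := ⟨n - 1, by omega⟩
  have h := card_chainSet (desE (m+1) π) (fun i => by unfold desE; split_ifs <;> omega) m k
  rw [des_eq_s4, Nat.add_sub_cancel, ← h, Nat.card_eq_fintype_card, Fintype.card_subtype]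
  apply Finset.card_bij (fun f _ => fun i => (f i).val)
  · intro f hf
    rw [mem_chainSet]
    exact ⟨fun i => (f i).2, (compat_iff π f).1 (by simpa using hf)⟩
  · intro f _ g _ hfg
    funext i
    exact Fin.ext (congrFun hfg i)
  · intro g hg
    rw [mem_chainSet] at hg
    refine ⟨fun i => ⟨g i, hg.1 i⟩, ?_, rfl⟩
    simp only [Finset.mem_filter, Finset.mem_univ, true_and]
    rw [compat_iff]
    exact hg.2

lemma des_lt {n : ℕ} (hn : 1 ≤ n) (π : Equiv.Perm (Fin n)) : des n π ≤ n - 1 := by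
  unfold des
  refine (Finset.card_filter_le _ _).trans ?_
  simp

lemma X_pow_des {n : ℕ} (hn : 1 ≤ n) (π : Equiv.Perm (Fin n)) :
    (PowerSeries.X : PowerSeries ℚ) ^ (des n π + 1) =
      (1 - PowerSeries.X) ^ (n + 1) *
        PowerSeries.mk (fun k => (Nat.card {f : Fin n → Fin k // Compat π f} : ℚ)) := by
  have h0 := des_lt hn π
  have h1 : PowerSeries.mk (fun k => (Nat.card {f : Fin n → Fin k // Compat π f} : ℚ))
      = PowerSeries.X ^ (des n π + 1) * PowerSeries.mk (fun k => ((n + k).choose n : ℚ)) := by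
    ext k
    rw [PowerSeries.coeff_mk, PowerSeries.coeff_X_pow_mul', PowerSeries.coeff_mk, card_compat hn]
    split_ifs with h
    · congr 2
      omega
    · rw [Nat.choose_eq_zero_of_lt (by omega)]
      simp
  rw [h1]
  have h2 := PowerSeries.mk_add_choose_mul_one_sub_pow_eq_one ℚ n
  linear_combination (-(PowerSeries.X : PowerSeries ℚ) ^ (des n π + 1)) * h2

lemma eulerian_eq {n : ℕ} (hn : 1 ≤ n) :
    ((eulerianA n : Polynomial ℚ) : PowerSeries ℚ) =
      (1 - PowerSeries.X) ^ (n + 1) * PowerSeries.mk (fun k => ((k : ℚ) ^ n)) := by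
  have h : PowerSeries.mk (fun k => ((k : ℚ) ^ n)) = ∑ π : Equiv.Perm (Fin n),
      PowerSeries.mk (fun k => (Nat.card {f : Fin n → Fin k // Compat π f} : ℚ)) := by
    ext k
    rw [map_sum]
    simp only [PowerSeries.coeff_mk]
    rw [← Nat.cast_sum, card_all]
    simp
  rw [h, Finset.mul_sum, eulerianA, ← Polynomial.coeToPowerSeries.ringHom_apply, map_sum]
  refine Finset.sum_congr rfl fun π _ => ?_
  rw [← X_pow_des hn, map_pow, Polynomial.coeToPowerSeries.ringHom_apply, Polynomial.coe_X]

lemma card_periodic (n k : ℕ) (hn : 1 ≤ n) :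
    Nat.card {w : ℕ → Fin k // Function.IsPeriodicPt (shiftSeq k) n w} = k ^ n := by
  let Φ : {w : ℕ → Fin k // Function.IsPeriodicPt (shiftSeq k) n w} → (Fin n → Fin k) :=
    fun w i => w.1 i.1
  have hmod : ∀ w : ℕ → Fin k, Function.IsPeriodicPt (shiftSeq k) n w → ∀ j, w j = w (j % n) := by
    intro w hw j
    have h2 : (shiftSeq k)^[n * (j / n)] w = w := hw.mul_const (j / n)
    have h1 := congrFun h2 (j % n)
    rw [shiftSeq_iter, Nat.mod_add_div] at h1
    exact h1
  have hΦ : Function.Bijective Φ := by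
    constructor
    · rintro ⟨w, hw⟩ ⟨w', hw'⟩ he
      apply Subtype.ext
      funext j
      change w j = w' j
      rw [hmod w hw, hmod w' hw']
      exact congrFun he ⟨j % n, Nat.mod_lt _ hn⟩
    · intro v
      refine ⟨⟨fun j => v ⟨j % n, Nat.mod_lt _ hn⟩, ?_⟩, ?_⟩
      · funext j
        rw [shiftSeq_iter]
        simp
      · funext i
        simp [Φ, Nat.mod_eq_of_lt i.2]
  rw [Nat.card_congr (Equiv.ofBijective Φ hΦ)]
  simp

instance finite_periodic (n k : ℕ) : Finite {w : ℕ → Fin k // 0 < n ∧ Function.minimalPeriod (shiftSeq k) w = n} := by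
  let Φ : {w : ℕ → Fin k // 0 < n ∧ Function.minimalPeriod (shiftSeq k) w = n} → (Fin n → Fin k) :=
    fun w i => w.1 i.1
  apply Finite.of_injective Φ
  rintro ⟨w, hn, hw⟩ ⟨w', _, hw'⟩ he
  apply Subtype.ext
  funext j
  have hmod : ∀ w : ℕ → Fin k, Function.minimalPeriod (shiftSeq k) w = n → ∀ j, w j = w (j % n) := by
    intro w hw j
    have hw1 : Function.IsPeriodicPt (shiftSeq k) n w := by
      rw [← hw]; exact Function.isPeriodicPt_minimalPeriod _ _
    have h2 : (shiftSeq k)^[n * (j / n)] w = w := hw1.mul_const (j / n)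
    have h1 := congrFun h2 (j % n)
    rw [shiftSeq_iter, Nat.mod_add_div] at h1
    exact h1
  change w j = w' j
  rw [hmod w hw, hmod w' hw']
  exact congrFun he ⟨j % n, Nat.mod_lt _ hn⟩

lemma sum_prim (n k : ℕ) (hn : 0 < n) :
    ∑ d ∈ n.divisors, Nat.card {w : ℕ → Fin k // 0 < d ∧ Function.minimalPeriod (shiftSeq k) w = d} = k ^ n := by
  rw [← card_periodic n k hn]
  let Φ : (Σ d : n.divisors, {w : ℕ → Fin k // 0 < d.1 ∧ Function.minimalPeriod (shiftSeq k) w = d.1}) →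
      {w : ℕ → Fin k // Function.IsPeriodicPt (shiftSeq k) n w} :=
    fun t => ⟨t.2.1, by
      rw [Function.isPeriodicPt_iff_minimalPeriod_dvd, t.2.2.2]
      exact Nat.dvd_of_mem_divisors t.1.2⟩
  have hΦ : Function.Bijective Φ := by
    constructor
    · rintro ⟨⟨d, hd⟩, ⟨w, h0, hw⟩⟩ ⟨⟨d', hd'⟩, ⟨w', h0', hw'⟩⟩ he
      have h1 : w = w' := congrArg Subtype.val he
      subst h1
      simp only at hw hw'
      subst hw
      subst hw'
      rfl
    · rintro ⟨w, hw⟩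
      exact ⟨⟨⟨Function.minimalPeriod (shiftSeq k) w, Nat.mem_divisors.2 ⟨hw.minimalPeriod_dvd, hn.ne'⟩⟩,
        ⟨w, hw.minimalPeriod_pos hn, rfl⟩⟩, rfl⟩
  rw [← Nat.card_congr (Equiv.ofBijective Φ hΦ), Nat.card_sigma, Finset.sum_coe_sort n.divisors
    (fun d => Nat.card {w : ℕ → Fin k // 0 < d ∧ Function.minimalPeriod (shiftSeq k) w = d})]

lemma prim_eq (n k : ℕ) (hn : 0 < n) :
    (Nat.card {w : ℕ → Fin k // Function.minimalPeriod (shiftSeq k) w = n} : ℚ) =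
      ∑ d ∈ n.divisors, ((ArithmeticFunction.moebius d : ℤ) : ℚ) * (k : ℚ) ^ (n / d) := by
  have h := (ArithmeticFunction.sum_eq_iff_sum_mul_moebius_eq
    (f := fun d => (Nat.card {w : ℕ → Fin k // 0 < d ∧ Function.minimalPeriod (shiftSeq k) w = d} : ℚ))
    (g := fun n => (k : ℚ) ^ n)).1 (fun n hn => by
      rw [← Nat.cast_sum, sum_prim n k hn]; simp) n hn
  simp only [hn, true_and] at h
  rw [← h, Nat.sum_divisorsAntidiagonal (fun a b => ((ArithmeticFunction.moebius a : ℤ) : ℚ) * (k : ℚ) ^ b)]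

lemma cyclic_iff {n : ℕ} (hn : 1 ≤ n) (π : Equiv.Perm (Fin n)) : IsCyclicPerm n π ↔ CycP π := by
  unfold IsCyclicPerm fullCycleType CycP
  rcases hn.eq_or_lt with rfl | hn
  · have : π = 1 := Subsingleton.elim _ _
    subst this
    simp
  · haveI : Nontrivial (Fin n) := Fin.nontrivial_iff_two_le.2 hn
    constructor
    · intro h
      have hr : n - π.support.card = 0 := by
        by_contra hne
        have : 1 ∈ ({n} : Multiset ℕ) := by
          rw [← h, Multiset.mem_add]
          right
          exact Multiset.mem_replicate.2 ⟨hne, rfl⟩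
        simp at this
        omega
      rw [hr, Multiset.replicate_zero, add_zero] at h
      have hc : π.IsCycle := by
        rw [← Equiv.Perm.card_cycleType_eq_one, h]
        simp
      have hs : π.support = Finset.univ := by
        apply Finset.eq_univ_of_card
        have h1 := Finset.card_le_univ π.support
        simp at h1 ⊢
        omega
      rw [← hs]
      have := hc.isCycleOn
      convert this using 1
      ext x
      simp
    · intro h
      have hc : π.IsCycle := by
        rw [Equiv.Perm.isCycle_iff_exists_isCycleOn]
        exact ⟨_, by simpa using Set.nontrivial_univ, h, by simp⟩
      have hs : π.support = Finset.univ := by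
        ext x
        simp only [Equiv.Perm.mem_support, Finset.mem_univ, iff_true]
        exact h.apply_ne (by simpa using Set.nontrivial_univ) (by simp)
      rw [hc.cycleType, hs]
      simp

theorem stmt4 (n : ℕ) (hn : 1 ≤ n) :
    (n : Polynomial ℚ) * ∑ π ∈ cyclicSet n, Polynomial.X ^ (des n π + 1)
      = ∑ d ∈ n.divisors,
          ((ArithmeticFunction.moebius d : ℤ) : Polynomial ℚ)
            * (1 - Polynomial.X) ^ (n - n / d) * eulerianA (n / d) := by
  apply Polynomial.coe_injective ℚ
  have hset : cyclicSet n = Finset.univ.filter fun π : Equiv.Perm (Fin n) => CycP π := by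
    unfold cyclicSet
    exact Finset.filter_congr fun π _ => cyclic_iff hn π
  rw [hset]
  simp only [← Polynomial.coeToPowerSeries.ringHom_apply, map_mul, map_sum, map_pow, map_sub, map_one,
    map_natCast, map_intCast]
  simp only [Polynomial.coeToPowerSeries.ringHom_apply, Polynomial.coe_X]
  have hL : (n : PowerSeries ℚ) * ∑ π ∈ (Finset.univ.filter fun π : Equiv.Perm (Fin n) => CycP π),
      (PowerSeries.X : PowerSeries ℚ) ^ (des n π + 1)
      = (1 - PowerSeries.X) ^ (n + 1) * PowerSeries.mk (fun k =>
        (Nat.card {w : ℕ → Fin k // Function.minimalPeriod (shiftSeq k) w = n} : ℚ)) := by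
    have h1 : PowerSeries.mk (fun k =>
        (Nat.card {w : ℕ → Fin k // Function.minimalPeriod (shiftSeq k) w = n} : ℚ)) =
        (n : PowerSeries ℚ) * ∑ π ∈ (Finset.univ.filter fun π : Equiv.Perm (Fin n) => CycP π),
          PowerSeries.mk (fun k => (Nat.card {f : Fin n → Fin k // Compat π f} : ℚ)) := by
      ext k
      rw [← nsmul_eq_mul, map_nsmul, map_sum]
      simp only [PowerSeries.coeff_mk]
      rw [← card_prim k hn, nsmul_eq_mul]
      push_cast
      rfl
    rw [h1, Finset.sum_congr rfl fun π _ => X_pow_des hn π, ← Finset.mul_sum]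
    ring
  have hR : PowerSeries.mk (fun k =>
        (Nat.card {w : ℕ → Fin k // Function.minimalPeriod (shiftSeq k) w = n} : ℚ)) =
      ∑ d ∈ n.divisors, ((ArithmeticFunction.moebius d : ℤ) : PowerSeries ℚ) *
        PowerSeries.mk (fun k => (k : ℚ) ^ (n / d)) := by
    ext k
    rw [PowerSeries.coeff_mk, prim_eq n k hn, map_sum]
    refine Finset.sum_congr rfl fun d _ => ?_
    rw [← zsmul_eq_mul, ← zsmul_eq_mul, map_zsmul, PowerSeries.coeff_mk]
  rw [hL, hR, Finset.mul_sum]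
  refine Finset.sum_congr rfl fun d hd => ?_
  have hdn := Nat.dvd_of_mem_divisors hd
  have hpos : 1 ≤ n / d := Nat.div_pos (Nat.le_of_dvd hn hdn) (Nat.pos_of_dvd_of_pos hdn hn)
  have hle : n / d ≤ n := Nat.div_le_self n d
  rw [eulerian_eq hpos, show n + 1 = (n - n / d) + (n / d + 1) by omega, pow_add]
  ring

end
end
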